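/- For every M > 0 there exists C > 0 such that sup_{t≥0} ‖u(t)‖_{L^∞} ≤ C for every global-in-time solution (s,u) of problem (P) with initial data (s₀,φ) ∈ W satisfying s₀ + s₀^{−1} + ‖φ‖_{Lip([0,s₀])} ≤ M. -/

import Mathlib

open Set MeasureTheory Filter Topology Real
open scoped ENNReal

noncomputable section

/-- `(s₀, φ)` belongs to the class `W`: `s₀ ∈ (0,∞)`, `φ` is Lipschitz on `[0,s₀]`,
not identically zero, nonnegative there, and vanishes at `s₀`. -/
def memW (s₀ : ℝ) (φ : ℝ → ℝ) : Prop :=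
  0 < s₀ ∧ (∃ K : NNReal, LipschitzOnWith K φ (Icc 0 s₀)) ∧
    (∃ x ∈ Icc 0 s₀, φ x ≠ 0) ∧ (∀ x ∈ Icc 0 s₀, 0 ≤ φ x) ∧ φ s₀ = 0

/-- `(s,u)` is a solution of the one-phase Stefan problem (P) on `(0,T]` (finite `T`)
with exponent `p` and initial data `(s₀,φ)`. -/
structure IsSolOn (p s₀ : ℝ) (φ : ℝ → ℝ) (T : ℝ) (s : ℝ → ℝ) (u : ℝ → ℝ → ℝ) : Prop where
  T_pos : 0 < T
  s_cont : ContinuousOn s (Icc 0 T)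
  s_diff : ∀ t ∈ Ioc 0 T, DifferentiableAt ℝ s t
  s_deriv_cont : ContinuousOn (deriv s) (Ioc 0 T)
  s_pos : ∀ t ∈ Icc 0 T, 0 < s t
  ut_diff : ∀ t ∈ Ioc 0 T, ∀ x ∈ Ioo 0 (s t), DifferentiableAt ℝ (fun τ => u τ x) t
  ux_diff : ∀ t ∈ Ioc 0 T, ∀ x ∈ Ioo 0 (s t), DifferentiableAt ℝ (u t) x
  uxx_diff : ∀ t ∈ Ioc 0 T, ∀ x ∈ Ioo 0 (s t), DifferentiableAt ℝ (deriv (u t)) x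
  ut_cont : ContinuousOn (fun q : ℝ × ℝ => deriv (fun τ => u τ q.2) q.1)
      {q : ℝ × ℝ | q.1 ∈ Ioc 0 T ∧ q.2 ∈ Ioo 0 (s q.1)}
  uxx_cont : ContinuousOn (fun q : ℝ × ℝ => deriv (deriv (u q.1)) q.2)
      {q : ℝ × ℝ | q.1 ∈ Ioc 0 T ∧ q.2 ∈ Ioo 0 (s q.1)}
  ux_cont : ContinuousOn (fun q : ℝ × ℝ => deriv (u q.1) q.2)
      {q : ℝ × ℝ | q.1 ∈ Ioc 0 T ∧ q.2 ∈ Icc 0 (s q.1)}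
  u_cont : ContinuousOn (fun q : ℝ × ℝ => u q.1 q.2)
      {q : ℝ × ℝ | q.1 ∈ Icc 0 T ∧ q.2 ∈ Icc 0 (s q.1)}
  u_nonneg : ∀ t ∈ Icc 0 T, ∀ x ∈ Icc 0 (s t), 0 ≤ u t x
  heat : ∀ t ∈ Ioc 0 T, ∀ x ∈ Ioo 0 (s t),
      deriv (fun τ => u τ x) t = deriv (deriv (u t)) x
  bc_zero : ∀ t ∈ Ioc 0 T, -deriv (u t) 0 = u t 0 ^ p
  bc_free : ∀ t ∈ Ioc 0 T, u t (s t) = 0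
  stefan : ∀ t ∈ Ioc 0 T, deriv s t = -deriv (u t) (s t)
  init : ∀ x ∈ Icc 0 s₀, u 0 x = φ x
  init_s : s 0 = s₀

/-- `(s,u)` is a global-in-time solution of problem (P). -/
def IsGlobalSol (p s₀ : ℝ) (φ : ℝ → ℝ) (s : ℝ → ℝ) (u : ℝ → ℝ → ℝ) : Prop :=
  ∀ T : ℝ, 0 < T → IsSolOn p s₀ φ T s u

/-- `Tm ∈ (0,∞]` is the maximal existence time of the solution `(s,u)` of (P) with
initial data `(s₀,φ)`: the solution exists on `(0,T]` for every `T < Tm`, and for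
`T > Tm` problem (P) admits no solution on `(0,T]`. -/
def IsMaxSol (p s₀ : ℝ) (φ : ℝ → ℝ) (Tm : ℝ≥0∞) (s : ℝ → ℝ) (u : ℝ → ℝ → ℝ) : Prop :=
  0 < Tm ∧
    (∀ T : ℝ, 0 < T → ENNReal.ofReal T < Tm → IsSolOn p s₀ φ T s u) ∧
    (∀ T : ℝ, Tm < ENNReal.ofReal T → ¬∃ σ v, IsSolOn p s₀ φ T σ v)

/-- The sup norm `‖u(t)‖_{L^∞(0,s(t))}`. -/
def supNorm (s : ℝ → ℝ) (u : ℝ → ℝ → ℝ) (t : ℝ) : ℝ :=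
  sSup (u t '' Ioo 0 (s t))

/-- The `L¹` norm `‖u(t)‖_{L¹(0,s(t))}` of the nonnegative function `u(t,·)`. -/
def L1Norm (s : ℝ → ℝ) (u : ℝ → ℝ → ℝ) (t : ℝ) : ℝ :=
  ∫ x in (0:ℝ)..(s t), u t x

/-- The energy `E(s(t),u(t))`. -/
def energy (p : ℝ) (s : ℝ → ℝ) (u : ℝ → ℝ → ℝ) (t : ℝ) : ℝ :=
  1 / 2 * (∫ x in (0:ℝ)..(s t), (deriv (u t) x) ^ 2) - u t 0 ^ (p + 1) / (p + 1)

/-- The Lipschitz norm `‖φ‖_{Lip([0,a])}`. -/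
def lipNorm (a : ℝ) (φ : ℝ → ℝ) : ℝ :=
  sSup ((fun x => |φ x|) '' Icc 0 a) +
    sSup ((fun q : ℝ × ℝ => |φ q.1 - φ q.2| / |q.1 - q.2|) ''
      {q : ℝ × ℝ | q.1 ∈ Icc 0 a ∧ q.2 ∈ Icc 0 a ∧ q.1 ≠ q.2})

/-!
The energy `E(t) = ½ ∫ u_x² - u(t,0)^(p+1) / (p+1)` decreases along solutions, and its decrease
controls `∫∫ u_t²`. As `u_t` need not be square integrable up to the boundary, this is proved in the
dual form `2 ∫ θ (u(t₂) - u(t₁)) ≤ E(t₁) - E(t₂) + (t₂ - t₁) ∫ θ²`, by differentiating in `t` the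
square of the time-integrated gradient over `[t, t + h]` and letting `h → 0`.

A quadratic barrier bounds `u` for a short time `τ`, hence bounds `E(τ)`. While `u(t,0) ≥ N` with
`N` large, the test function `θ ~ r - x` with `r ~ N^(1-p)` shows that `E` drops at the rate
`N^(3p-1)`. If `E` were ever very negative, then `u(t,0)^(p+1) ≳ -E` would make this rate
superlinear in `-E`, and the solution could not be global; so `E` is bounded below. Therefore
`u(t,0)` can climb from `N/4` to `N` only in a time at most of order `N^(1-3p)`, and the climb, seen
on the layer `x ≲ N^(1-p)`, costs an energy of order `N^(p+1)`. For large `N` this exceeds the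
energy available, which bounds `u(t,0)`; the maximum principle extends the bound to all `x`.
-/

/-! ### One-variable analysis -/

section Analysis

lemma intervalIntegrable_indicator_of_continuous {f : ℝ → ℝ} (hf : Continuous f) {S : Set ℝ}
    (hS : MeasurableSet S) (a b : ℝ) : IntervalIntegrable (S.indicator f) volume a b :=
  intervalIntegrable_iff.2 ((intervalIntegrable_iff.1 (hf.intervalIntegrable a b)).indicator hS)

lemma integral_indicator_Ioc {f : ℝ → ℝ} {a b c d : ℝ} (hac : a ≤ c) (hcd : c ≤ d) (hdb : d ≤ b) :
    ∫ x in a..b, (Ioc c d).indicator f x = ∫ x in c..d, f x := by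
  rw [intervalIntegral.integral_of_le (hac.trans (hcd.trans hdb)),
    intervalIntegral.integral_of_le hcd, setIntegral_indicator measurableSet_Ioc,
    inter_eq_self_of_subset_right (Ioc_subset_Ioc hac hdb)]

lemma abs_integral_le_of_abs_le {f : ℝ → ℝ} {a b C : ℝ} (hab : a ≤ b)
    (hf : ∀ x ∈ Ioc a b, |f x| ≤ C) : |∫ x in a..b, f x| ≤ C * (b - a) := by
  rw [← abs_of_nonneg (sub_nonneg.2 hab), ← Real.norm_eq_abs]
  exact intervalIntegral.norm_integral_le_of_norm_le_const (uIoc_of_le hab ▸ hf)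

lemma hasDerivAt_min_sub_min {c d x : ℝ} (hcd : c ≤ d) (hc : x ≠ c) (hd : x ≠ d) :
    HasDerivAt (fun y => min y d - min y c) ((Ioc c d).indicator 1 x) x := by
  rcases lt_or_gt_of_ne hc with hxc | hcx
  · rw [indicator_of_notMem fun h => hxc.not_gt h.1]
    refine (hasDerivAt_const x 0).congr_of_eventuallyEq ?_
    filter_upwards [gt_mem_nhds hxc] with y hy
    simp [hy.le, hy.le.trans hcd]
  rcases lt_or_gt_of_ne hd with hxd | hdx
  · rw [indicator_of_mem (show x ∈ Ioc c d from ⟨hcx, hxd.le⟩)]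
    refine ((hasDerivAt_id x).sub_const c).congr_of_eventuallyEq ?_
    filter_upwards [Ioo_mem_nhds hcx hxd] with y hy
    simp [hy.1.le, hy.2.le]
  · rw [indicator_of_notMem fun h => hdx.not_ge h.2]
    refine (hasDerivAt_const x (d - c)).congr_of_eventuallyEq ?_
    filter_upwards [lt_mem_nhds hdx] with y hy
    simp [hy.le, hcd.trans hy.le]

lemma isLittleO_integral_moving_endpoint {f : ℝ → ℝ → ℝ} {σ : ℝ → ℝ} {t : ℝ}
    (hf : ContinuousAt (fun q : ℝ × ℝ => f q.1 q.2) (t, σ t)) (hσ : ContinuousAt σ t)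
    (h0 : f t (σ t) = 0) :
    (fun y => ∫ z in σ t..σ y, f y z) =o[𝓝 t] fun y => σ y - σ t := by
  refine Asymptotics.isLittleO_iff.2 fun ε hε => ?_
  obtain ⟨δ, hδ, hfδ⟩ := Metric.continuousAt_iff.1 hf ε hε
  filter_upwards [Metric.ball_mem_nhds t hδ, hσ.eventually (Metric.ball_mem_nhds (σ t) hδ)]
    with y hy hσy
  refine intervalIntegral.norm_integral_le_of_norm_le_const fun z hz => ?_
  have hz_near : dist z (σ t) < δ :=
    (abs_sub_left_of_mem_uIcc (uIoc_subset_uIcc hz)).trans_lt hσy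
  simpa [h0] using (hfδ (x := (y, z)) (max_lt hy hz_near)).le

lemma hasDerivWithinAt_integral_of_slope_bound {F : ℝ → ℝ → ℝ} {F' : ℝ → ℝ} {t a b C : ℝ}
    (hF : ∀ y, Continuous (F y))
    (hslope : ∀ᶠ y in 𝓝[>] t, ∀ x ∈ uIoc a b, |slope (fun τ => F τ x) t y| ≤ C)
    (hderiv : ∀ x ∈ uIoc a b, HasDerivWithinAt (fun τ => F τ x) (F' x) (Ioi t) t) :
    HasDerivWithinAt (fun τ => ∫ x in a..b, F τ x) (∫ x in a..b, F' x) (Ioi t) t := by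
  rw [hasDerivWithinAt_iff_tendsto_slope' self_notMem_Ioi]
  have slope_integral : slope (fun τ => ∫ x in a..b, F τ x) t =
      fun y => ∫ x in a..b, slope (fun τ => F τ x) t y := by
    funext y
    simp only [slope_def_field]
    rw [intervalIntegral.integral_div, intervalIntegral.integral_sub
      ((hF y).intervalIntegrable _ _) ((hF t).intervalIntegrable _ _)]
  rw [slope_integral]
  refine intervalIntegral.tendsto_integral_filter_of_dominated_convergence (fun _ => C)
    (.of_forall fun y => Continuous.aestronglyMeasurable ?_)
    (hslope.mono fun y hy => .of_forall hy) intervalIntegrable_const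
    (.of_forall fun x hx => (hasDerivWithinAt_iff_tendsto_slope' self_notMem_Ioi).1 (hderiv x hx))
  simp only [slope_def_field]
  exact ((hF y).sub (hF t)).div_const _

lemma two_mul_integral_mul_sub_le {f θ : ℝ → ℝ} {a b : ℝ} (hab : a ≤ b) (hf : Continuous f)
    (hθ : Continuous θ) (h : ℝ) :
    2 * h * (∫ x in a..b, θ x * f x) - h ^ 2 * (∫ x in a..b, θ x ^ 2) ≤ ∫ x in a..b, f x ^ 2 := by
  have cross_int : Continuous fun x => 2 * h * (θ x * f x) := by fun_prop
  have sq_int : Continuous fun x => h ^ 2 * θ x ^ 2 := by fun_prop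
  rw [← intervalIntegral.integral_const_mul, ← intervalIntegral.integral_const_mul,
    ← intervalIntegral.integral_sub (cross_int.intervalIntegrable _ _)
      (sq_int.intervalIntegrable _ _)]
  refine intervalIntegral.integral_mono_on hab ((cross_int.sub sq_int).intervalIntegrable _ _)
    ((hf.pow 2).intervalIntegrable _ _) fun x _ => ?_
  nlinarith [sq_nonneg (f x - h * θ x)]

lemma tendsto_integral_shift_sub_div {k : ℝ → ℝ} (hk : Continuous k) (a b : ℝ) :
    Tendsto (fun h => (∫ t in a..b, (k (t + h) - k t)) / h) (𝓝[>] 0) (𝓝 (k b - k a)) := by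
  have hint := fun c d => hk.intervalIntegrable (μ := volume) c d
  have average : ∀ t, Tendsto (fun h => (∫ y in t..t + h, k y) / h) (𝓝[>] 0) (𝓝 (k t)) := fun t =>
    (hk.integral_hasStrictDerivAt t t).hasDerivAt.tendsto_slope_zero_right.congr fun h => by
      simp [inv_mul_eq_div]
  refine ((average b).sub (average a)).congr fun h => ?_
  have shift_int : IntervalIntegrable (fun t => k (t + h)) volume a b :=
    (hk.comp (continuous_add_const h)).intervalIntegrable a b
  rw [← sub_div, intervalIntegral.integral_sub shift_int (hint a b),
    intervalIntegral.integral_comp_add_right]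
  congr 1
  linarith [intervalIntegral.integral_add_adjacent_intervals (hint a b) (hint b (b + h)),
    intervalIntegral.integral_add_adjacent_intervals (hint a (a + h)) (hint (a + h) (b + h))]

lemma rpow_mul_sub_le_rpow_add_one_div_sub {p x y : ℝ} (hp : 0 < p) (hx : 0 ≤ x) (hy : 0 ≤ y) :
    x ^ p * (y - x) ≤ y ^ (p + 1) / (p + 1) - x ^ (p + 1) / (p + 1) := by
  have conj : ((p + 1) / p).HolderConjugate (p + 1) := by
    rw [Real.holderConjugate_iff, lt_div_iff₀ hp]
    constructor
    · linarith
    · field_simp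
  have young := Real.young_inequality_of_nonneg (Real.rpow_nonneg hx p) hy conj
  rw [← Real.rpow_mul hx, mul_div_cancel₀ _ hp.ne'] at young
  have split : x ^ (p + 1) / ((p + 1) / p) = x ^ (p + 1) - x ^ (p + 1) / (p + 1) := by
    field_simp; ring
  rw [mul_sub, ← Real.rpow_add_one' hx (by linarith)]
  linarith

lemma abs_rpow_sub_rpow_le {p C x y : ℝ} (hp : 1 ≤ p) (hx : x ∈ Icc 0 C) (hy : y ∈ Icc 0 C) :
    |y ^ p - x ^ p| ≤ p * C ^ (p - 1) * |y - x| := by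
  refine Convex.norm_image_sub_le_of_norm_hasDerivWithin_le (f := fun z : ℝ => z ^ p)
    (fun z _ => (Real.hasDerivAt_rpow_const (Or.inr hp)).hasDerivWithinAt) (fun z hz => ?_)
    (convex_Icc 0 C) hx hy
  rw [Real.norm_of_nonneg (mul_nonneg (by linarith) (Real.rpow_nonneg hz.1 _))]
  have := Real.rpow_le_rpow hz.1 hz.2 (sub_nonneg.2 hp)
  gcongr

end Analysis

/-! ### Integrated Stefan strips -/

/-- The integrated form of the one-phase Stefan problem on the time interval `[a,b]`, with front
`σ`, temperature `U` and temperature gradient `R`. The heat equation enters only through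
`integral_temp_sub`, its integral over `[t,t'] × [0,y]`. All three functions are taken to be
defined and continuous for all times and positions, so that no domain conditions are needed. -/
structure StefanStrip (a b : ℝ) (σ : ℝ → ℝ) (U R : ℝ → ℝ → ℝ) : Prop where
  front_continuous : Continuous σ
  front_monotone : Monotone σ
  front_pos : ∀ t, 0 < σ t
  temp_continuous : Continuous fun q : ℝ × ℝ => U q.1 q.2
  grad_continuous : Continuous fun q : ℝ × ℝ => R q.1 q.2
  temp_nonneg : ∀ t x, 0 ≤ U t x
  temp_eq_zero : ∀ t x, σ t ≤ x → U t x = 0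
  temp_hasDerivAt : ∀ t ∈ Icc a b, ∀ x ∈ Ioo 0 (σ t), HasDerivAt (U t) (R t x) x
  integral_temp_sub : ∀ t ∈ Icc a b, ∀ t' ∈ Icc a b, t ≤ t' → ∀ y ∈ Icc 0 (σ t),
    ∫ x in (0:ℝ)..y, (U t' x - U t x) = ∫ τ in t..t', (R τ y - R τ 0)
  front_sub : ∀ t ∈ Icc a b, ∀ t' ∈ Icc a b, t ≤ t' → σ t' - σ t = -∫ τ in t..t', R τ (σ τ)

/-- The gradient `R`, set to zero beyond the front: the gradient of the temperature on the whole
half-line. -/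
def extGrad (σ : ℝ → ℝ) (R : ℝ → ℝ → ℝ) (t x : ℝ) : ℝ := if x ≤ σ t then R t x else 0

/-- The time integral of `extGrad σ R · x` over `[t,t']` (see `StefanStrip.integral_extGrad`),
written so that its space derivative is visible: by the mass balance it is the boundary flux plus
the growth of the enthalpy to the left of `x`. -/
def fluxIntegral (σ : ℝ → ℝ) (U R : ℝ → ℝ → ℝ) (t t' x : ℝ) : ℝ :=
  (∫ τ in t..t', R τ 0) + (∫ z in (0:ℝ)..x, (U t' z - U t z)) + (min x (σ t') - min x (σ t))

namespace StefanStrip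

variable {a b : ℝ} {σ : ℝ → ℝ} {U R : ℝ → ℝ → ℝ}

lemma continuous_temp_space (S : StefanStrip a b σ U R) (t : ℝ) : Continuous (U t) :=
  S.temp_continuous.comp (Continuous.prodMk_right t)

lemma continuous_temp_time (S : StefanStrip a b σ U R) (x : ℝ) : Continuous fun t => U t x :=
  S.temp_continuous.comp (Continuous.prodMk_left x)

lemma continuous_grad_space (S : StefanStrip a b σ U R) (t : ℝ) : Continuous (R t) :=
  S.grad_continuous.comp (Continuous.prodMk_right t)

lemma continuous_grad_time (S : StefanStrip a b σ U R) (x : ℝ) : Continuous fun t => R t x :=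
  S.grad_continuous.comp (Continuous.prodMk_left x)

lemma continuous_grad_front (S : StefanStrip a b σ U R) : Continuous fun t => R t (σ t) :=
  S.grad_continuous.comp (continuous_id.prodMk S.front_continuous)

lemma temp_intervalIntegrable (S : StefanStrip a b σ U R) (t c d : ℝ) :
    IntervalIntegrable (U t) volume c d :=
  (S.continuous_temp_space t).intervalIntegrable c d

lemma integral_temp_eq_zero (S : StefanStrip a b σ U R) {t c d : ℝ} (hc : σ t ≤ c) (hcd : c ≤ d) :
    ∫ x in c..d, U t x = 0 := by
  rw [intervalIntegral.integral_congr (g := fun _ => 0) fun x hx => ?_,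
    intervalIntegral.integral_zero]
  exact S.temp_eq_zero t x (hc.trans (uIcc_of_le hcd ▸ hx).1)

lemma extGrad_eq_indicator_time (x : ℝ) :
    (fun t => extGrad σ R t x) = {t | x ≤ σ t}.indicator fun t => R t x := by
  funext t; simp [extGrad, indicator]

lemma extGrad_eq_indicator_space (t : ℝ) : extGrad σ R t = (Iic (σ t)).indicator (R t) := by
  funext x; simp [extGrad, indicator]

lemma intervalIntegrable_extGrad_time (S : StefanStrip a b σ U R) (x c d : ℝ) :
    IntervalIntegrable (fun t => extGrad σ R t x) volume c d :=
  extGrad_eq_indicator_time (σ := σ) (R := R) x ▸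
    intervalIntegrable_indicator_of_continuous (S.continuous_grad_time x)
      (isClosed_le continuous_const S.front_continuous).measurableSet c d

lemma intervalIntegrable_extGrad_space (S : StefanStrip a b σ U R) (t c d : ℝ) :
    IntervalIntegrable (extGrad σ R t) volume c d :=
  extGrad_eq_indicator_space (σ := σ) (R := R) t ▸
    intervalIntegrable_indicator_of_continuous (S.continuous_grad_space t) measurableSet_Iic c d

lemma exists_abs_extGrad_le (S : StefanStrip a b σ U R) :
    ∃ C, 0 ≤ C ∧ ∀ t ∈ Icc a b, ∀ x, 0 ≤ x → |extGrad σ R t x| ≤ C := by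
  obtain ⟨C, hC⟩ := (isCompact_Icc.prod isCompact_Icc).exists_bound_of_continuousOn
    (s := Icc a b ×ˢ Icc 0 (σ b)) S.grad_continuous.continuousOn
  refine ⟨|C|, abs_nonneg C, fun t ht x hx => ?_⟩
  unfold extGrad
  split_ifs with hxσ
  · exact (hC (t, x) ⟨ht, hx, hxσ.trans (S.front_monotone ht.2)⟩).trans (le_abs_self C)
  · simp

lemma isBigO_front_sub (S : StefanStrip a b σ U R) {t : ℝ} (ht : t ∈ Ico a b) :
    (fun y => σ y - σ t) =O[𝓝[>] t] fun y => y - t := by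
  obtain ⟨C, -, hC⟩ := S.exists_abs_extGrad_le
  refine .of_bound C ?_
  filter_upwards [Ioc_mem_nhdsGT ht.2] with y hy
  rw [S.front_sub t ⟨ht.1, ht.2.le⟩ y ⟨ht.1.trans hy.1.le, hy.2⟩ hy.1.le, norm_neg,
    Real.norm_of_nonneg (sub_pos.2 hy.1).le]
  refine abs_integral_le_of_abs_le hy.1.le fun τ hτ => ?_
  simpa [extGrad] using
    hC τ ⟨ht.1.trans hτ.1.le, hτ.2.trans hy.2⟩ (σ τ) (S.front_pos τ).le

lemma enthalpy_eq_of_le_front (S : StefanStrip a b σ U R) {t y x : ℝ} (ht : t ∈ Icc a b)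
    (hy : y ∈ Icc a b) (hty : t ≤ y) (hx : x ∈ Icc 0 (σ t)) :
    (∫ z in (0:ℝ)..x, U y z) + min x (σ y) =
      ((∫ z in (0:ℝ)..x, U t z) + x) + ∫ τ in t..y, (R τ x - R τ 0) := by
  rw [← S.integral_temp_sub t ht y hy hty x hx, intervalIntegral.integral_sub
    (S.temp_intervalIntegrable ..) (S.temp_intervalIntegrable ..),
    min_eq_left (hx.2.trans (S.front_monotone hty))]
  ring

lemma enthalpy_eq_of_front_le (S : StefanStrip a b σ U R) {t y x : ℝ} (ht : t ∈ Icc a b)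
    (hy : y ∈ Icc a b) (hty : t ≤ y) (hx : σ y ≤ x) :
    (∫ z in (0:ℝ)..x, U y z) + min x (σ y) = ((∫ z in (0:ℝ)..x, U t z) + σ t) +
      ((∫ τ in t..y, (R τ (σ t) - R τ 0 - R τ (σ τ))) + ∫ z in σ t..σ y, U y z) := by
  have htx : σ t ≤ x := (S.front_monotone hty).trans hx
  have mass_y : (∫ z in (0:ℝ)..σ t, U y z) + (∫ z in σ t..σ y, U y z) = ∫ z in (0:ℝ)..x, U y z := by
    rw [← intervalIntegral.integral_add_adjacent_intervals (S.temp_intervalIntegrable y 0 (σ y))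
      (S.temp_intervalIntegrable y (σ y) x), S.integral_temp_eq_zero le_rfl hx, add_zero]
    exact intervalIntegral.integral_add_adjacent_intervals (S.temp_intervalIntegrable ..)
      (S.temp_intervalIntegrable ..)
  have mass_t : ∫ z in (0:ℝ)..σ t, U t z = ∫ z in (0:ℝ)..x, U t z := by
    rw [← intervalIntegral.integral_add_adjacent_intervals (S.temp_intervalIntegrable t 0 (σ t))
      (S.temp_intervalIntegrable t (σ t) x), S.integral_temp_eq_zero le_rfl htx, add_zero]
  have balance := S.integral_temp_sub t ht y hy hty (σ t) ⟨(S.front_pos t).le, le_rfl⟩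
  rw [intervalIntegral.integral_sub (S.temp_intervalIntegrable ..)
    (S.temp_intervalIntegrable ..)] at balance
  have flux_cont : Continuous fun τ => R τ (σ t) - R τ 0 :=
    (S.continuous_grad_time _).sub (S.continuous_grad_time _)
  rw [intervalIntegral.integral_sub (flux_cont.intervalIntegrable _ _)
    (S.continuous_grad_front.intervalIntegrable _ _), min_eq_right hx]
  linarith [S.front_sub t ht y hy hty]

lemma hasDerivWithinAt_enthalpy_of_le_front (S : StefanStrip a b σ U R) {t x : ℝ}
    (ht : t ∈ Ico a b) (hx : x ∈ Icc 0 (σ t)) :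
    HasDerivWithinAt (fun τ => (∫ z in (0:ℝ)..x, U τ z) + min x (σ τ))
      (R t x - R t 0) (Ioi t) t := by
  have flux_cont := (S.continuous_grad_time x).sub (S.continuous_grad_time 0)
  refine ((flux_cont.integral_hasStrictDerivAt t t).hasDerivAt.hasDerivWithinAt.const_add
    ((∫ z in (0:ℝ)..x, U t z) + x)).congr_of_eventuallyEq ?_
    (S.enthalpy_eq_of_le_front ⟨ht.1, ht.2.le⟩ ⟨ht.1, ht.2.le⟩ le_rfl hx)
  filter_upwards [Ioc_mem_nhdsGT ht.2] with y hy
  exact S.enthalpy_eq_of_le_front ⟨ht.1, ht.2.le⟩ ⟨ht.1.trans hy.1.le, hy.2⟩ hy.1.le hx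

lemma hasDerivWithinAt_enthalpy_of_front_lt (S : StefanStrip a b σ U R) {t x : ℝ}
    (ht : t ∈ Ico a b) (hx : σ t < x) :
    HasDerivWithinAt (fun τ => (∫ z in (0:ℝ)..x, U τ z) + min x (σ τ)) (-R t 0) (Ioi t) t := by
  have flux_cont : Continuous fun τ => R τ (σ t) - R τ 0 - R τ (σ τ) :=
    ((S.continuous_grad_time _).sub (S.continuous_grad_time _)).sub S.continuous_grad_front
  have flux_deriv := (flux_cont.integral_hasStrictDerivAt t t).hasDerivAt.hasDerivWithinAt
    (s := Ioi t)
  have melted_deriv : HasDerivWithinAt (fun y => ∫ z in σ t..σ y, U y z) 0 (Ioi t) t := by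
    rw [hasDerivWithinAt_iff_isLittleO]
    simpa using ((isLittleO_integral_moving_endpoint S.temp_continuous.continuousAt
      S.front_continuous.continuousAt (S.temp_eq_zero t _ le_rfl)).mono
      nhdsWithin_le_nhds).trans_isBigO (S.isBigO_front_sub ht)
  have front_lt : ∀ᶠ y in 𝓝[>] t, σ y < x :=
    (S.front_continuous.continuousAt.eventually_lt continuousAt_const hx).filter_mono
      nhdsWithin_le_nhds
  refine (((flux_deriv.add melted_deriv).const_add ((∫ z in (0:ℝ)..x, U t z) + σ t)).congr_deriv
    (by ring)).congr_of_eventuallyEq ?_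
    (S.enthalpy_eq_of_front_le ⟨ht.1, ht.2.le⟩ ⟨ht.1, ht.2.le⟩ le_rfl hx.le)
  filter_upwards [Ioc_mem_nhdsGT ht.2, front_lt] with y hy hyx
  exact S.enthalpy_eq_of_front_le ⟨ht.1, ht.2.le⟩ ⟨ht.1.trans hy.1.le, hy.2⟩ hy.1.le hyx.le

lemma hasDerivWithinAt_enthalpy (S : StefanStrip a b σ U R) {t x : ℝ} (ht : t ∈ Ico a b)
    (hx : 0 ≤ x) :
    HasDerivWithinAt (fun τ => (∫ z in (0:ℝ)..x, U τ z) + min x (σ τ))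
      (extGrad σ R t x - R t 0) (Ioi t) t := by
  unfold extGrad
  split_ifs with hxσ
  · exact S.hasDerivWithinAt_enthalpy_of_le_front ht ⟨hx, hxσ⟩
  · simpa using S.hasDerivWithinAt_enthalpy_of_front_lt ht (not_le.1 hxσ)

lemma fluxIntegral_eq_enthalpy (S : StefanStrip a b σ U R) (t t' x : ℝ) :
    fluxIntegral σ U R t t' x = (∫ τ in t..t', R τ 0) +
      ((∫ z in (0:ℝ)..x, U t' z) + min x (σ t')) - ((∫ z in (0:ℝ)..x, U t z) + min x (σ t)) := by
  rw [fluxIntegral, intervalIntegral.integral_sub (S.temp_intervalIntegrable ..)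
    (S.temp_intervalIntegrable ..)]
  ring

lemma fluxIntegral_sub (S : StefanStrip a b σ U R) (c t t' x : ℝ) :
    fluxIntegral σ U R c t' x - fluxIntegral σ U R c t x = fluxIntegral σ U R t t' x := by
  have flux_int := fun c d => (S.continuous_grad_time 0).intervalIntegrable (μ := volume) c d
  simp only [S.fluxIntegral_eq_enthalpy]
  rw [← intervalIntegral.integral_add_adjacent_intervals (flux_int c t) (flux_int t t')]
  ring

lemma hasDerivWithinAt_fluxIntegral (S : StefanStrip a b σ U R) (c : ℝ) {t x : ℝ}
    (ht : t ∈ Ico a b) (hx : 0 ≤ x) :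
    HasDerivWithinAt (fun y => fluxIntegral σ U R c y x) (extGrad σ R t x) (Ioi t) t := by
  have flux_deriv := ((S.continuous_grad_time 0).integral_hasStrictDerivAt c t).hasDerivAt
  simp only [S.fluxIntegral_eq_enthalpy]
  exact ((flux_deriv.hasDerivWithinAt.add (S.hasDerivWithinAt_enthalpy ht hx)).sub_const
    _).congr_deriv (by ring)

lemma continuous_uncurry_fluxIntegral (S : StefanStrip a b σ U R) :
    Continuous fun q : (ℝ × ℝ) × ℝ => fluxIntegral σ U R q.1.1 q.1.2 q.2 := by
  have hσ := S.front_continuous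
  have flux_int := fun c d => (S.continuous_grad_time 0).intervalIntegrable (μ := volume) c d
  have primitive : Continuous fun y => ∫ τ in (0:ℝ)..y, R τ 0 :=
    intervalIntegral.continuous_primitive flux_int 0
  have flux : Continuous fun q : (ℝ × ℝ) × ℝ => ∫ τ in q.1.1..q.1.2, R τ 0 :=
    ((primitive.comp (by fun_prop)).sub (primitive.comp (by fun_prop))).congr fun q =>
      intervalIntegral.integral_interval_sub_left (flux_int 0 q.1.2) (flux_int 0 q.1.1)
  have mass : Continuous fun q : (ℝ × ℝ) × ℝ => ∫ z in (0:ℝ)..q.2, (U q.1.2 z - U q.1.1 z) := by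
    refine intervalIntegral.continuous_parametric_intervalIntegral_of_continuous
      (f := fun (q : (ℝ × ℝ) × ℝ) z => U q.1.2 z - U q.1.1 z) (Continuous.sub ?_ ?_) continuous_snd
    · exact S.temp_continuous.comp
        (by fun_prop : Continuous fun q : ((ℝ × ℝ) × ℝ) × ℝ => (q.1.1.2, q.2))
    · exact S.temp_continuous.comp
        (by fun_prop : Continuous fun q : ((ℝ × ℝ) × ℝ) × ℝ => (q.1.1.1, q.2))
  exact (flux.add mass).add (by fun_prop)

lemma continuous_fluxIntegral (S : StefanStrip a b σ U R) (t t' : ℝ) :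
    Continuous (fluxIntegral σ U R t t') :=
  S.continuous_uncurry_fluxIntegral.comp (Continuous.prodMk_right (t, t'))

lemma integral_extGrad (S : StefanStrip a b σ U R) {t t' x : ℝ} (ht : t ∈ Icc a b)
    (ht' : t' ∈ Icc a b) (htt' : t ≤ t') (hx : 0 ≤ x) :
    ∫ τ in t..t', extGrad σ R τ x = fluxIntegral σ U R t t' x := by
  rw [intervalIntegral.integral_eq_sub_of_hasDeriv_right (f := fun y => fluxIntegral σ U R t y x)
    ?_ (fun y hy => ?_) (S.intervalIntegrable_extGrad_time x t t'), S.fluxIntegral_sub]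
  · exact (S.continuous_uncurry_fluxIntegral.comp
      (by fun_prop : Continuous fun y : ℝ => ((t, y), x))).continuousOn
  · rw [min_eq_left htt', max_eq_right htt'] at hy
    exact S.hasDerivWithinAt_fluxIntegral t ⟨ht.1.trans hy.1.le, hy.2.trans_le ht'.2⟩ hx

lemma abs_fluxIntegral_le (S : StefanStrip a b σ U R) {C : ℝ}
    (hC : ∀ t ∈ Icc a b, ∀ x, 0 ≤ x → |extGrad σ R t x| ≤ C) {t t' x : ℝ} (ht : t ∈ Icc a b)
    (ht' : t' ∈ Icc a b) (htt' : t ≤ t') (hx : 0 ≤ x) :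
    |fluxIntegral σ U R t t' x| ≤ C * (t' - t) := by
  rw [← S.integral_extGrad ht ht' htt' hx]
  exact abs_integral_le_of_abs_le htt' fun τ hτ =>
    hC τ ⟨ht.1.trans hτ.1.le, hτ.2.trans ht'.2⟩ x hx

end StefanStrip

/-! ### The energy inequality on a strip -/

namespace StefanStrip

variable {a b : ℝ} {σ : ℝ → ℝ} {U R : ℝ → ℝ → ℝ}

lemma hasDerivAt_temp (S : StefanStrip a b σ U R) {τ x : ℝ} (hτ : τ ∈ Icc a b) (hx : 0 < x)
    (hxσ : x ≠ σ τ) : HasDerivAt (U τ) (extGrad σ R τ x) x := by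
  rcases lt_or_gt_of_ne hxσ with hlt | hgt
  · rw [extGrad, if_pos hlt.le]
    exact S.temp_hasDerivAt τ hτ x ⟨hx, hlt⟩
  · rw [extGrad, if_neg hgt.not_ge]
    refine (hasDerivAt_const x 0).congr_of_eventuallyEq ?_
    filter_upwards [lt_mem_nhds hgt] with y hy using S.temp_eq_zero τ y hy.le

lemma hasDerivAt_fluxIntegral (S : StefanStrip a b σ U R) {t t' x : ℝ} (htt' : t ≤ t')
    (hx : x ≠ σ t) (hx' : x ≠ σ t') :
    HasDerivAt (fluxIntegral σ U R t t')
      ((U t' x - U t x) + (Ioc (σ t) (σ t')).indicator 1 x) x :=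
  (((((S.continuous_temp_space t').sub (S.continuous_temp_space t)).integral_hasStrictDerivAt
    0 x).hasDerivAt).const_add _).add (hasDerivAt_min_sub_min (S.front_monotone htt') hx hx')

lemma fluxIntegral_zero_right (S : StefanStrip a b σ U R) (t t' : ℝ) :
    fluxIntegral σ U R t t' 0 = ∫ τ in t..t', R τ 0 := by
  simp [fluxIntegral, (S.front_pos t).le, (S.front_pos t').le]

lemma intervalIntegrable_fluxIntegral_mul_extGrad (S : StefanStrip a b σ U R) (t t' τ c d : ℝ) :
    IntervalIntegrable (fun x => fluxIntegral σ U R t t' x * extGrad σ R τ x) volume c d :=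
  (S.intervalIntegrable_extGrad_space τ c d).continuousOn_mul
    (S.continuous_fluxIntegral t t').continuousOn

lemma integral_fluxIntegral_mul_extGrad (S : StefanStrip a b σ U R) {t t' τ L : ℝ} (htt' : t ≤ t')
    (hτ : τ ∈ Icc a b) (hL' : σ t' ≤ L) (hLτ : σ τ ≤ L) :
    ∫ x in (0:ℝ)..L, fluxIntegral σ U R t t' x * extGrad σ R τ x =
      -(∫ y in t..t', R y 0) * U τ 0 - (∫ x in (0:ℝ)..L, (U t' x - U t x) * U τ x)
        - ∫ x in σ t..σ t', U τ x := by
  have hL : 0 ≤ L := (S.front_pos t').le.trans hL'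
  have change_int : IntervalIntegrable (fun x => (U t' x - U t x) * U τ x) volume 0 L :=
    (((S.continuous_temp_space t').sub (S.continuous_temp_space t)).mul
      (S.continuous_temp_space τ)).intervalIntegrable 0 L
  have melted_int : IntervalIntegrable ((Ioc (σ t) (σ t')).indicator (U τ)) volume 0 L :=
    intervalIntegrable_indicator_of_continuous (S.continuous_temp_space τ) measurableSet_Ioc 0 L
  have flux_int := S.intervalIntegrable_fluxIntegral_mul_extGrad t t' τ 0 L
  have parts := MeasureTheory.integral_eq_of_hasDerivAt_off_countable_of_le
    (fun x => fluxIntegral σ U R t t' x * U τ x)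
    (fun x => ((U t' x - U t x) * U τ x + (Ioc (σ t) (σ t')).indicator (U τ) x) +
      fluxIntegral σ U R t t' x * extGrad σ R τ x) hL
    (s := {σ t, σ t', σ τ}) (Set.toFinite _).countable
    ((S.continuous_fluxIntegral t t').mul (S.continuous_temp_space τ)).continuousOn
    (fun x ⟨hx, hne⟩ => by
      simp only [mem_insert_iff, mem_singleton_iff, not_or] at hne
      refine ((S.hasDerivAt_fluxIntegral htt' hne.1 hne.2.1).mul
        (S.hasDerivAt_temp hτ hx.1 hne.2.2)).congr_deriv ?_
      by_cases hx' : x ∈ Ioc (σ t) (σ t') <;> simp [hx', add_mul])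
    ((change_int.add melted_int).add flux_int)
  rw [intervalIntegral.integral_add (change_int.add melted_int) flux_int,
    intervalIntegral.integral_add change_int melted_int, S.temp_eq_zero τ L hLτ,
    integral_indicator_Ioc (S.front_pos t).le (S.front_monotone htt') hL',
    S.fluxIntegral_zero_right] at parts
  linarith

/-- The squared `L²` norm on `[0,L]` of the gradient integrated over the time window `[t,t+h]`.
Divided by `h²` it approximates the Dirichlet energy, and unlike the latter it is differentiable
in time without any control on the time derivative of the temperature. -/
def fluxSq (σ : ℝ → ℝ) (U R : ℝ → ℝ → ℝ) (L h t : ℝ) : ℝ :=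
  ∫ x in (0:ℝ)..L, fluxIntegral σ U R t (t + h) x ^ 2

lemma continuous_fluxSq (S : StefanStrip a b σ U R) (L h : ℝ) : Continuous (fluxSq σ U R L h) :=
  intervalIntegral.continuous_parametric_intervalIntegral_of_continuous'
    ((S.continuous_uncurry_fluxIntegral.comp
      (by fun_prop : Continuous fun q : ℝ × ℝ => ((q.1, q.1 + h), q.2))).pow 2) 0 L

lemma fluxIntegral_shift_sub (S : StefanStrip a b σ U R) (h t y x : ℝ) :
    fluxIntegral σ U R y (y + h) x - fluxIntegral σ U R t (t + h) x =
      fluxIntegral σ U R (t + h) (y + h) x - fluxIntegral σ U R t y x := by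
  rw [← S.fluxIntegral_sub t y, ← S.fluxIntegral_sub t (t + h) (y + h)]
  ring

lemma hasDerivWithinAt_fluxIntegral_shift (S : StefanStrip a b σ U R) {h t x : ℝ} (hh : 0 < h)
    (ha : a ≤ t) (hb : t + h < b) (hx : 0 ≤ x) :
    HasDerivWithinAt (fun y => fluxIntegral σ U R y (y + h) x)
      (extGrad σ R (t + h) x - extGrad σ R t x) (Ioi t) t := by
  have late := (S.hasDerivWithinAt_fluxIntegral a (t := t + h) ⟨by linarith, hb⟩ hx).comp t
    ((hasDerivWithinAt_id t (Ioi t)).add_const h) fun y hy => by simpa using hy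
  refine ((late.sub (S.hasDerivWithinAt_fluxIntegral a ⟨ha, by linarith⟩ hx)).congr_deriv
    (by ring)).congr (fun y _ => ?_) ?_ <;> exact (S.fluxIntegral_sub ..).symm

lemma abs_slope_fluxIntegral_shift_sq_le (S : StefanStrip a b σ U R) {C : ℝ}
    (hC : ∀ t ∈ Icc a b, ∀ x, 0 ≤ x → |extGrad σ R t x| ≤ C) {h t y x : ℝ} (hh : 0 < h)
    (ha : a ≤ t) (hty : t < y) (hb : y + h ≤ b) (hx : 0 ≤ x) :
    |slope (fun τ => fluxIntegral σ U R τ (τ + h) x ^ 2) t y| ≤ 4 * C ^ 2 * h := by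
  have hC0 : 0 ≤ C := (abs_nonneg _).trans (hC t ⟨ha, by linarith⟩ x hx)
  have flux_le : ∀ {c d}, a ≤ c → c ≤ d → d ≤ b → |fluxIntegral σ U R c d x| ≤ C * (d - c) :=
    fun hc hcd hd => S.abs_fluxIntegral_le hC ⟨hc, hcd.trans hd⟩ ⟨hc.trans hcd, hd⟩ hcd hx
  have sum_le : |fluxIntegral σ U R y (y + h) x + fluxIntegral σ U R t (t + h) x| ≤ 2 * C * h := by
    have hy := flux_le (c := y) (d := y + h) (by linarith) (by linarith) hb
    have ht := flux_le (c := t) (d := t + h) ha (by linarith) (by linarith)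
    rw [add_sub_cancel_left] at hy ht
    linarith [abs_add_le (fluxIntegral σ U R y (y + h) x) (fluxIntegral σ U R t (t + h) x)]
  have sub_le : |fluxIntegral σ U R (t + h) (y + h) x - fluxIntegral σ U R t y x| ≤
      2 * C * (y - t) := by
    have hlate := flux_le (c := t + h) (d := y + h) (by linarith) (by linarith) hb
    have hearly := flux_le (c := t) (d := y) ha hty.le (by linarith)
    rw [add_sub_add_right_eq_sub] at hlate
    linarith [abs_sub (fluxIntegral σ U R (t + h) (y + h) x) (fluxIntegral σ U R t y x)]
  rw [slope_def_field, abs_div, abs_of_pos (sub_pos.2 hty), div_le_iff₀ (sub_pos.2 hty),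
    sq_sub_sq, abs_mul, S.fluxIntegral_shift_sub]
  calc _ ≤ (2 * C * h) * (2 * C * (y - t)) := by gcongr
    _ = 4 * C ^ 2 * h * (y - t) := by ring

lemma hasDerivWithinAt_fluxSq (S : StefanStrip a b σ U R) {L h t : ℝ} (hL : 0 ≤ L) (hh : 0 < h)
    (ha : a ≤ t) (hb : t + h < b) :
    HasDerivWithinAt (fluxSq σ U R L h) (∫ x in (0:ℝ)..L, 2 * fluxIntegral σ U R t (t + h) x *
      (extGrad σ R (t + h) x - extGrad σ R t x)) (Ioi t) t := by
  obtain ⟨C, -, hC⟩ := S.exists_abs_extGrad_le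
  refine hasDerivWithinAt_integral_of_slope_bound (C := 4 * C ^ 2 * h)
    (fun y => (S.continuous_fluxIntegral y (y + h)).pow 2) ?_ fun x hx => ?_
  · filter_upwards [Ioo_mem_nhdsGT (lt_sub_iff_add_lt.2 hb)] with y hy x hx
    rw [uIoc_of_le hL] at hx
    exact S.abs_slope_fluxIntegral_shift_sq_le hC hh ha hy.1 (by linarith [hy.2]) hx.1.le
  · rw [uIoc_of_le hL] at hx
    exact ((S.hasDerivWithinAt_fluxIntegral_shift hh ha hb hx.1.le).fun_pow 2).congr_deriv (by simp)

lemma integral_fluxIntegral_mul_extGrad_sub_le (S : StefanStrip a b σ U R) {t t' L : ℝ}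
    (ht : t ∈ Icc a b) (ht' : t' ∈ Icc a b) (htt' : t ≤ t') (hL : σ b ≤ L) :
    ∫ x in (0:ℝ)..L, fluxIntegral σ U R t t' x * (extGrad σ R t' x - extGrad σ R t x) ≤
      -(∫ y in t..t', R y 0) * (U t' 0 - U t 0) - ∫ x in (0:ℝ)..L, (U t' x - U t x) ^ 2 := by
  have hLt' : σ t' ≤ L := (S.front_monotone ht'.2).trans hL
  have melted_nonneg : 0 ≤ ∫ x in σ t..σ t', U t' x :=
    intervalIntegral.integral_nonneg (S.front_monotone htt') fun x _ => S.temp_nonneg t' x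
  have change_int : ∀ τ, IntervalIntegrable (fun x => (U t' x - U t x) * U τ x) volume 0 L :=
    fun τ => (((S.continuous_temp_space t').sub (S.continuous_temp_space t)).mul
      (S.continuous_temp_space τ)).intervalIntegrable 0 L
  have change_sq : ∫ x in (0:ℝ)..L, (U t' x - U t x) ^ 2 =
      (∫ x in (0:ℝ)..L, (U t' x - U t x) * U t' x) -
        ∫ x in (0:ℝ)..L, (U t' x - U t x) * U t x := by
    rw [← intervalIntegral.integral_sub (change_int t') (change_int t)]
    congr 1; funext x; ring
  simp only [mul_sub]
  rw [intervalIntegral.integral_sub (S.intervalIntegrable_fluxIntegral_mul_extGrad ..)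
      (S.intervalIntegrable_fluxIntegral_mul_extGrad ..),
    S.integral_fluxIntegral_mul_extGrad htt' ht' hLt' hLt',
    S.integral_fluxIntegral_mul_extGrad htt' ht hLt' ((S.front_monotone htt').trans hLt'),
    S.integral_temp_eq_zero le_rfl (S.front_monotone htt'), change_sq]
  linarith

lemma deriv_fluxSq_le (S : StefanStrip a b σ U R) {L h t r : ℝ} (hh : 0 < h) (ha : a ≤ t)
    (hb : t + h ≤ b) (hL : σ b ≤ L) (hr : r ∈ Icc 0 L) {θ : ℝ → ℝ} (hθ : Continuous θ) :
    ∫ x in (0:ℝ)..L, 2 * fluxIntegral σ U R t (t + h) x *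
        (extGrad σ R (t + h) x - extGrad σ R t x) ≤
      -2 * (∫ y in t..t + h, R y 0) * (U (t + h) 0 - U t 0)
      - 4 * h * (∫ x in (0:ℝ)..r, θ x * (U (t + h) x - U t x))
      + 2 * h ^ 2 * ∫ x in (0:ℝ)..r, θ x ^ 2 := by
  have change_cont : Continuous fun x => U (t + h) x - U t x :=
    (S.continuous_temp_space _).sub (S.continuous_temp_space t)
  have dissipation := S.integral_fluxIntegral_mul_extGrad_sub_le (t := t) (t' := t + h)
    ⟨ha, by linarith⟩ ⟨by linarith, hb⟩ (by linarith) hL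
  have young := two_mul_integral_mul_sub_le hr.1 change_cont hθ h
  have enlarge : ∫ x in (0:ℝ)..r, (U (t + h) x - U t x) ^ 2 ≤
      ∫ x in (0:ℝ)..L, (U (t + h) x - U t x) ^ 2 :=
    intervalIntegral.integral_mono_interval le_rfl hr.1 hr.2 (.of_forall fun x => sq_nonneg _)
      ((change_cont.pow 2).intervalIntegrable 0 L)
  simp only [mul_assoc, intervalIntegral.integral_const_mul] at dissipation ⊢
  linarith

end StefanStrip

namespace StefanStrip

variable {a b : ℝ} {σ : ℝ → ℝ} {U R : ℝ → ℝ → ℝ}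

lemma measurable_extGrad_space (S : StefanStrip a b σ U R) (t : ℝ) : Measurable (extGrad σ R t) :=
  extGrad_eq_indicator_space (σ := σ) (R := R) t ▸
    (S.continuous_grad_space t).measurable.indicator measurableSet_Iic

lemma tendsto_extGrad_right (S : StefanStrip a b σ U R) (t x : ℝ) :
    Tendsto (fun z => extGrad σ R z x) (𝓝[>] t) (𝓝 (extGrad σ R t x)) := by
  by_cases hx : x ≤ σ t
  · rw [extGrad, if_pos hx]
    refine (((S.continuous_grad_time x).tendsto t).mono_left nhdsWithin_le_nhds).congr' ?_
    filter_upwards [self_mem_nhdsWithin] with z hz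
    exact (if_pos (hx.trans (S.front_monotone (le_of_lt hz)))).symm
  · rw [extGrad, if_neg hx]
    refine tendsto_const_nhds.congr' ?_
    filter_upwards [nhdsWithin_le_nhds (S.front_continuous.continuousAt.eventually_lt
      continuousAt_const (not_le.1 hx))] with z hz
    exact (if_neg hz.not_ge).symm

lemma tendsto_fluxIntegral_div (S : StefanStrip a b σ U R) {t x : ℝ} (ht : t ∈ Ico a b)
    (hx : 0 ≤ x) :
    Tendsto (fun z => fluxIntegral σ U R t z x / (z - t)) (𝓝[>] t) (𝓝 (extGrad σ R t x)) := by
  refine ((hasDerivWithinAt_iff_tendsto_slope' self_notMem_Ioi).1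
    (S.hasDerivWithinAt_fluxIntegral t ht hx)).congr fun z => ?_
  rw [slope_def_field, S.fluxIntegral_sub]

lemma abs_fluxIntegral_div_le (S : StefanStrip a b σ U R) {C : ℝ}
    (hC : ∀ t ∈ Icc a b, ∀ x, 0 ≤ x → |extGrad σ R t x| ≤ C) {t z x : ℝ} (ht : t ∈ Ico a b)
    (hz : z ∈ Ioc t b) (hx : 0 ≤ x) : |fluxIntegral σ U R t z x / (z - t)| ≤ C := by
  rw [abs_div, abs_of_pos (sub_pos.2 hz.1), div_le_iff₀ (sub_pos.2 hz.1)]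
  exact S.abs_fluxIntegral_le hC ⟨ht.1, ht.2.le⟩ ⟨ht.1.trans hz.1.le, hz.2⟩ hz.1.le hx

lemma tendsto_fluxSq_div_sq (S : StefanStrip a b σ U R) {t L : ℝ} (ht : t ∈ Ico a b)
    (hL : 0 ≤ L) :
    Tendsto (fun h => fluxSq σ U R L h t / h ^ 2) (𝓝[>] 0)
      (𝓝 (∫ x in (0:ℝ)..L, extGrad σ R t x ^ 2)) := by
  obtain ⟨C, -, hC⟩ := S.exists_abs_extGrad_le
  have shift : Tendsto (fun h => t + h) (𝓝[>] 0) (𝓝[>] t) :=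
    tendsto_nhdsWithin_iff.2 ⟨((continuous_const_add t).tendsto' 0 t (add_zero t)).mono_left
      nhdsWithin_le_nhds, by filter_upwards [self_mem_nhdsWithin] with h hh; simpa using hh⟩
  have quotient : Tendsto (fun z => ∫ x in (0:ℝ)..L, (fluxIntegral σ U R t z x / (z - t)) ^ 2)
      (𝓝[>] t) (𝓝 (∫ x in (0:ℝ)..L, extGrad σ R t x ^ 2)) := by
    refine intervalIntegral.tendsto_integral_filter_of_dominated_convergence (fun _ => C ^ 2)
      (.of_forall fun z =>
        (((S.continuous_fluxIntegral t z).div_const _).pow 2).aestronglyMeasurable)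
      ?_ intervalIntegrable_const (.of_forall fun x hx => ?_)
    · filter_upwards [Ioc_mem_nhdsGT ht.2] with z hz
      refine .of_forall fun x hx => ?_
      rw [uIoc_of_le hL] at hx
      rw [norm_pow]
      exact pow_le_pow_left₀ (norm_nonneg _) (S.abs_fluxIntegral_div_le hC ht hz hx.1.le) 2
    · rw [uIoc_of_le hL] at hx
      exact (S.tendsto_fluxIntegral_div ht hx.1.le).pow 2
  refine (quotient.comp shift).congr fun h => ?_
  simp [fluxSq, div_pow]

lemma tendsto_integral_fluxIntegral_div_mul (S : StefanStrip a b σ U R) {t L : ℝ}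
    (ht : t ∈ Ico a b) (hL : 0 ≤ L) :
    Tendsto (fun z => ∫ x in (0:ℝ)..L, fluxIntegral σ U R t z x / (z - t) *
        (extGrad σ R z x + extGrad σ R t x)) (𝓝[>] t)
      (𝓝 (2 * ∫ x in (0:ℝ)..L, extGrad σ R t x ^ 2)) := by
  obtain ⟨C, hC0, hC⟩ := S.exists_abs_extGrad_le
  have square : ∫ x in (0:ℝ)..L, extGrad σ R t x * (extGrad σ R t x + extGrad σ R t x) =
      2 * ∫ x in (0:ℝ)..L, extGrad σ R t x ^ 2 := by
    rw [← intervalIntegral.integral_const_mul]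
    congr 1; funext x; ring
  rw [← square]
  refine intervalIntegral.tendsto_integral_filter_of_dominated_convergence (fun _ => C * (C + C))
    (.of_forall fun z => Measurable.aestronglyMeasurable
      (((S.continuous_fluxIntegral t z).measurable.div_const _).mul
        ((S.measurable_extGrad_space z).add (S.measurable_extGrad_space t))))
    ?_ intervalIntegrable_const (.of_forall fun x hx => ?_)
  · filter_upwards [Ioc_mem_nhdsGT ht.2] with z hz
    refine .of_forall fun x hx => ?_
    rw [uIoc_of_le hL] at hx
    rw [norm_mul]
    have late := hC z ⟨ht.1.trans hz.1.le, hz.2⟩ x hx.1.le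
    have early := hC t ⟨ht.1, ht.2.le⟩ x hx.1.le
    exact mul_le_mul (S.abs_fluxIntegral_div_le hC ht hz hx.1.le)
      ((abs_add_le _ _).trans (add_le_add late early)) (norm_nonneg _) hC0
  · rw [uIoc_of_le hL] at hx
    exact (S.tendsto_fluxIntegral_div ht hx.1.le).mul ((S.tendsto_extGrad_right t x).add_const _)

lemma integral_temp_sq_sub_le (S : StefanStrip a b σ U R) {t t' L : ℝ} (ht : t ∈ Icc a b)
    (ht' : t' ∈ Icc a b) (htt' : t ≤ t') (hL : σ b ≤ L) :
    (∫ x in (0:ℝ)..L, U t' x ^ 2) - ∫ x in (0:ℝ)..L, U t x ^ 2 ≤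
      -(∫ y in t..t', R y 0) * (U t' 0 + U t 0) -
        ∫ x in (0:ℝ)..L, fluxIntegral σ U R t t' x * (extGrad σ R t' x + extGrad σ R t x) := by
  have hLt' : σ t' ≤ L := (S.front_monotone ht'.2).trans hL
  have melted_nonneg : ∀ τ, 0 ≤ ∫ x in σ t..σ t', U τ x := fun τ =>
    intervalIntegral.integral_nonneg (S.front_monotone htt') fun x _ => S.temp_nonneg τ x
  have change_cont : ∀ τ, Continuous fun x => (U t' x - U t x) * U τ x := fun τ =>
    ((S.continuous_temp_space t').sub (S.continuous_temp_space t)).mul (S.continuous_temp_space τ)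
  have sq_cont : ∀ τ, Continuous fun x => U τ x ^ 2 := fun τ => (S.continuous_temp_space τ).pow 2
  have factor : (∫ x in (0:ℝ)..L, (U t' x - U t x) * U t' x) +
      (∫ x in (0:ℝ)..L, (U t' x - U t x) * U t x) =
      (∫ x in (0:ℝ)..L, U t' x ^ 2) - ∫ x in (0:ℝ)..L, U t x ^ 2 := by
    rw [← intervalIntegral.integral_add ((change_cont _).intervalIntegrable _ _)
      ((change_cont _).intervalIntegrable _ _), ← intervalIntegral.integral_sub
      ((sq_cont _).intervalIntegrable _ _) ((sq_cont _).intervalIntegrable _ _)]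
    congr 1; funext x; ring
  simp only [mul_add]
  rw [intervalIntegral.integral_add (S.intervalIntegrable_fluxIntegral_mul_extGrad ..)
      (S.intervalIntegrable_fluxIntegral_mul_extGrad ..),
    S.integral_fluxIntegral_mul_extGrad htt' ht' hLt' hLt',
    S.integral_fluxIntegral_mul_extGrad htt' ht hLt' ((S.front_monotone htt').trans hLt'), ← factor]
  linarith [melted_nonneg t, melted_nonneg t']

lemma eventually_slope_integral_temp_sq_lt (S : StefanStrip a b σ U R) {t L κ : ℝ}
    (ht : t ∈ Ico a b) (hL : σ b ≤ L)
    (hκ : -2 * R t 0 * U t 0 - 2 * (∫ x in (0:ℝ)..L, extGrad σ R t x ^ 2) < κ) :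
    ∀ᶠ z in 𝓝[>] t, slope (fun y => ∫ x in (0:ℝ)..L, U y x ^ 2) t z < κ := by
  have flux_deriv : Tendsto (fun z => (∫ y in t..z, R y 0) / (z - t)) (𝓝[>] t) (𝓝 (R t 0)) := by
    refine ((hasDerivWithinAt_iff_tendsto_slope' self_notMem_Ioi).1
      (((S.continuous_grad_time 0).integral_hasStrictDerivAt t
        t).hasDerivAt.hasDerivWithinAt)).congr fun z => ?_
    simp [slope_def_field]
  have temp_lim : Tendsto (fun z => U z 0) (𝓝[>] t) (𝓝 (U t 0)) :=
    ((S.continuous_temp_time 0).tendsto t).mono_left nhdsWithin_le_nhds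
  have bound_lim := (flux_deriv.neg.mul (temp_lim.add_const (U t 0))).sub
    (S.tendsto_integral_fluxIntegral_div_mul ht ((S.front_pos b).le.trans hL))
  filter_upwards [bound_lim.eventually_lt_const (lt_of_eq_of_lt (by ring) hκ),
    Ioc_mem_nhdsGT ht.2] with z hz hzt
  refine lt_of_le_of_lt ?_ hz
  rw [slope_def_field]
  refine (div_le_div_of_nonneg_right (S.integral_temp_sq_sub_le ⟨ht.1, ht.2.le⟩
    ⟨ht.1.trans hzt.1.le, hzt.2⟩ hzt.1.le hL) (sub_pos.2 hzt.1).le).trans_eq ?_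
  simp only [div_mul_eq_mul_div, intervalIntegral.integral_div]
  ring

lemma integral_grad (S : StefanStrip a b σ U R) {τ x : ℝ} (hτ : τ ∈ Icc a b)
    (hx : x ∈ Icc 0 (σ τ)) : ∫ z in (0:ℝ)..x, R τ z = U τ x - U τ 0 :=
  intervalIntegral.integral_eq_sub_of_hasDerivAt_of_le hx.1 (S.continuous_temp_space τ).continuousOn
    (fun z hz => S.temp_hasDerivAt τ hτ z ⟨hz.1, hz.2.trans_le hx.2⟩)
    ((S.continuous_grad_space τ).intervalIntegrable _ _)

lemma abs_temp_sub_sub_le (S : StefanStrip a b σ U R) {t t' x η : ℝ} (ht : t ∈ Icc a b)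
    (ht' : t' ∈ Icc a b) (htt' : t ≤ t') (hx : x ∈ Icc 0 (σ t))
    (hη : ∀ z ∈ Icc 0 x, |R t' z - R t z| ≤ η) :
    |(U t' x - U t x) - (U t' 0 - U t 0)| ≤ η * x := by
  have increment : (U t' x - U t x) - (U t' 0 - U t 0) = ∫ z in (0:ℝ)..x, (R t' z - R t z) := by
    rw [intervalIntegral.integral_sub ((S.continuous_grad_space t').intervalIntegrable _ _)
      ((S.continuous_grad_space t).intervalIntegrable _ _), S.integral_grad ht hx,
      S.integral_grad ht' ⟨hx.1, hx.2.trans (S.front_monotone htt')⟩]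
    ring
  rw [increment]
  simpa using abs_integral_le_of_abs_le hx.1 fun z hz => hη z ⟨hz.1.le, hz.2⟩

-- Compares the boundary value with the mean over `[0,ρ]`, whose change is a difference of fluxes.
lemma mul_abs_temp_zero_sub_le (S : StefanStrip a b σ U R) {t t' ρ η : ℝ} (ht : t ∈ Icc a b)
    (ht' : t' ∈ Icc a b) (htt' : t ≤ t') (hρ : ρ ∈ Icc 0 (σ t))
    (hspace : ∀ τ ∈ Icc t t', |R τ ρ - R τ 0| ≤ η)
    (htime : ∀ z ∈ Icc 0 ρ, |R t' z - R t z| ≤ η) :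
    ρ * |U t' 0 - U t 0| ≤ η * ((t' - t) + ρ ^ 2) := by
  have hη : 0 ≤ η := (abs_nonneg _).trans (hspace t (left_mem_Icc.2 htt'))
  have mean_change : |∫ x in (0:ℝ)..ρ, (U t' x - U t x)| ≤ η * (t' - t) := by
    rw [S.integral_temp_sub t ht t' ht' htt' ρ hρ]
    exact abs_integral_le_of_abs_le htt' fun τ hτ => hspace τ ⟨hτ.1.le, hτ.2⟩
  have deviation : |∫ x in (0:ℝ)..ρ, ((U t' x - U t x) - (U t' 0 - U t 0))| ≤ η * ρ * ρ := by
    refine (abs_integral_le_of_abs_le hρ.1 fun x hx => ?_).trans_eq (by rw [sub_zero])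
    exact (S.abs_temp_sub_sub_le ht ht' htt' ⟨hx.1.le, hx.2.trans hρ.2⟩
      fun z hz => htime z ⟨hz.1, hz.2.trans hx.2⟩).trans (mul_le_mul_of_nonneg_left hx.2 hη)
  have change_cont : Continuous fun x => U t' x - U t x :=
    (S.continuous_temp_space t').sub (S.continuous_temp_space t)
  rw [intervalIntegral.integral_sub (change_cont.intervalIntegrable _ _) intervalIntegrable_const,
    intervalIntegral.integral_const, sub_zero, smul_eq_mul] at deviation
  rw [← abs_of_nonneg hρ.1, ← abs_mul, abs_of_nonneg hρ.1]
  rw [abs_le] at *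
  constructor <;> linarith

lemma exists_abs_temp_zero_sub_le_mul_sqrt (S : StefanStrip a b σ U R) {ε : ℝ} (hε : 0 < ε) :
    ∃ δ > 0, ∀ t ∈ Icc a b, ∀ t' ∈ Icc a b, t ≤ t' → t' - t ≤ δ →
      |U t' 0 - U t 0| ≤ ε * √(t' - t) := by
  obtain ⟨η, hη, hR⟩ := Metric.uniformContinuousOn_iff.1
    ((isCompact_Icc.prod isCompact_Icc).uniformContinuousOn_of_continuous
      (s := Icc a b ×ˢ Icc 0 (σ a)) S.grad_continuous.continuousOn) (ε / 2) (by positivity)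
  have hσ := S.front_pos a
  have hm : 0 < min (η / 2) (σ a) := lt_min (by positivity) hσ
  refine ⟨min (η / 2) (min (η / 2) (σ a) ^ 2), lt_min (by positivity) (by positivity),
    fun t ht t' ht' htt' hδ => ?_⟩
  rcases htt'.eq_or_lt with rfl | hlt
  · simp
  have hρ : 0 < √(t' - t) := Real.sqrt_pos.2 (sub_pos.2 hlt)
  have hρm : √(t' - t) ≤ min (η / 2) (σ a) :=
    Real.sqrt_le_iff.2 ⟨hm.le, hδ.trans (min_le_right _ _)⟩
  have hρη : √(t' - t) < η := (hρm.trans (min_le_left _ _)).trans_lt (half_lt_self hη)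
  have hρσ : √(t' - t) ≤ σ a := hρm.trans (min_le_right _ _)
  have htη : t' - t < η := (hδ.trans (min_le_left _ _)).trans_lt (half_lt_self hη)
  have oscillation := S.mul_abs_temp_zero_sub_le (η := ε / 2) ht ht' htt'
    ⟨hρ.le, hρσ.trans (S.front_monotone ht.1)⟩
    (fun τ hτ => (hR (τ, √(t' - t)) ⟨⟨ht.1.trans hτ.1, hτ.2.trans ht'.2⟩, hρ.le, hρσ⟩
      (τ, 0) ⟨⟨ht.1.trans hτ.1, hτ.2.trans ht'.2⟩, le_rfl, hσ.le⟩
      (by simpa [Prod.dist_eq, Real.dist_eq, abs_of_pos hρ] using hρη)).le)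
    fun z hz => (hR (t', z) ⟨ht', hz.1, hz.2.trans hρσ⟩ (t, z) ⟨ht, hz.1, hz.2.trans hρσ⟩
      (by simpa [Prod.dist_eq, Real.dist_eq, hη, abs_of_pos (sub_pos.2 hlt)] using htη)).le
  rw [Real.sq_sqrt (sub_pos.2 hlt).le] at oscillation
  refine le_of_mul_le_mul_left (oscillation.trans_eq ?_) hρ
  rw [mul_left_comm, Real.mul_self_sqrt (sub_pos.2 hlt).le]
  ring

end StefanStrip

namespace StefanStrip

variable {a b p : ℝ} {σ : ℝ → ℝ} {U R : ℝ → ℝ → ℝ}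

lemma abs_integral_temp_rpow_sub_le (S : StefanStrip a b σ U R) (hp : 1 ≤ p) {C e h t : ℝ}
    (hh : 0 ≤ h) (hC : ∀ y ∈ Icc t (t + h), U y 0 ≤ C)
    (hosc : ∀ y ∈ Icc t (t + h), |U y 0 - U t 0| ≤ e) :
    |(∫ y in t..t + h, U y 0 ^ p) - h * U t 0 ^ p| ≤ p * C ^ (p - 1) * e * h := by
  have hth : t ≤ t + h := le_add_of_nonneg_right hh
  have power_cont : Continuous fun y => U y 0 ^ p :=
    (S.continuous_temp_time 0).rpow_const fun _ => Or.inr (by linarith)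
  have hC0 : 0 ≤ C := (S.temp_nonneg t 0).trans (hC t (left_mem_Icc.2 hth))
  have merge : (∫ y in t..t + h, U y 0 ^ p) - h * U t 0 ^ p =
      ∫ y in t..t + h, (U y 0 ^ p - U t 0 ^ p) := by
    rw [intervalIntegral.integral_sub (power_cont.intervalIntegrable _ _) intervalIntegrable_const]
    simp
  rw [merge]
  refine (abs_integral_le_of_abs_le hth fun y hy => ?_).trans_eq (by rw [add_sub_cancel_left])
  refine (abs_rpow_sub_rpow_le hp ⟨S.temp_nonneg t 0, hC t (left_mem_Icc.2 hth)⟩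
    ⟨S.temp_nonneg y 0, hC y ⟨hy.1.le, hy.2⟩⟩).trans ?_
  exact mul_le_mul_of_nonneg_left (hosc y ⟨hy.1.le, hy.2⟩)
    (mul_nonneg (by linarith) (Real.rpow_nonneg hC0 _))

-- Convexity of `x ^ (p + 1)` bounds the main term; the remainder is quadratic in the oscillation
-- of the boundary temperature, which is `o(√h)`.
lemma exists_boundary_flux_mul_temp_sub_le (S : StefanStrip a b σ U R) (hp : 1 ≤ p)
    (hbc : ∀ t ∈ Icc a b, R t 0 = -U t 0 ^ p) {ε : ℝ} (hε : 0 < ε) :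
    ∃ δ > 0, ∀ h, 0 < h → h ≤ δ → ∀ t, a ≤ t → t + h ≤ b →
      -(∫ y in t..t + h, R y 0) * (U (t + h) 0 - U t 0) ≤
        h * (U (t + h) 0 ^ (p + 1) / (p + 1) - U t 0 ^ (p + 1) / (p + 1)) + ε * h ^ 2 := by
  obtain ⟨B, hB⟩ := isCompact_Icc.exists_bound_of_continuousOn (s := Icc a b)
    (S.continuous_temp_time 0).continuousOn
  have hK : 0 < p * |B| ^ (p - 1) + 1 := by positivity
  set K := p * |B| ^ (p - 1) + 1
  obtain ⟨δ, hδ, hosc⟩ := S.exists_abs_temp_zero_sub_le_mul_sqrt (ε := √(ε / K)) (by positivity)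
  refine ⟨δ, hδ, fun h hh hhδ t ha hb => ?_⟩
  set e := √(ε / K) * √h with he
  have he_sq : K * e ^ 2 = ε * h := by
    rw [he, mul_pow, Real.sq_sqrt (by positivity), Real.sq_sqrt hh.le]; field_simp
  have osc_le : ∀ y ∈ Icc t (t + h), |U y 0 - U t 0| ≤ e := fun y hy =>
    (hosc t ⟨ha, by linarith⟩ y ⟨ha.trans hy.1, hy.2.trans hb⟩ hy.1 (by linarith [hy.2])).trans
      (mul_le_mul_of_nonneg_left (Real.sqrt_le_sqrt (by linarith [hy.2])) (Real.sqrt_nonneg _))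
  have flux_eq : -(∫ y in t..t + h, R y 0) = ∫ y in t..t + h, U y 0 ^ p := by
    rw [← intervalIntegral.integral_neg]
    refine intervalIntegral.integral_congr fun y hy => ?_
    rw [uIcc_of_le (by linarith)] at hy
    simp [hbc y ⟨ha.trans hy.1, hy.2.trans hb⟩]
  have flux_le := S.abs_integral_temp_rpow_sub_le hp (C := |B|) hh.le (fun y hy => (le_abs_self
    _).trans ((hB y ⟨ha.trans hy.1, hy.2.trans hb⟩).trans (le_abs_self B))) osc_le
  have remainder : ((∫ y in t..t + h, U y 0 ^ p) - h * U t 0 ^ p) * (U (t + h) 0 - U t 0) ≤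
      ε * h ^ 2 := by
    have end_osc := osc_le (t + h) ⟨by linarith, le_rfl⟩
    have : 0 ≤ e := (abs_nonneg _).trans end_osc
    refine (le_abs_self _).trans ?_
    rw [abs_mul]
    calc _ ≤ (K * e * h) * e := by
          gcongr
          exact flux_le.trans (by gcongr; exact (lt_add_one _).le)
      _ = (K * e ^ 2) * h := by ring
      _ = ε * h ^ 2 := by rw [he_sq]; ring
  have tangent := rpow_mul_sub_le_rpow_add_one_div_sub (by linarith) (S.temp_nonneg t 0)
    (S.temp_nonneg (t + h) 0) (p := p)
  rw [flux_eq]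
  linarith [mul_le_mul_of_nonneg_left tangent hh.le]

/-- The time-dependent part of the energy balance other than the Dirichlet energy: the boundary
term of the energy, minus twice the pairing of the temperature with the test function `θ`. -/
def boundaryPotential (p : ℝ) (U : ℝ → ℝ → ℝ) (θ : ℝ → ℝ) (r t : ℝ) : ℝ :=
  U t 0 ^ (p + 1) / (p + 1) - 2 * ∫ x in (0:ℝ)..r, θ x * U t x

lemma continuous_boundaryPotential (S : StefanStrip a b σ U R) (hp : 0 ≤ p) {θ : ℝ → ℝ}
    (hθ : Continuous θ) (r : ℝ) : Continuous (boundaryPotential p U θ r) :=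
  (((S.continuous_temp_time 0).rpow_const fun _ => Or.inr (by linarith)).div_const _).sub
    (continuous_const.mul (intervalIntegral.continuous_parametric_intervalIntegral_of_continuous'
      (f := fun t x => θ x * U t x) ((hθ.comp continuous_snd).mul S.temp_continuous) 0 r))

lemma boundaryPotential_sub (S : StefanStrip a b σ U R) {θ : ℝ → ℝ} (hθ : Continuous θ)
    (p r t t' : ℝ) :
    boundaryPotential p U θ r t' - boundaryPotential p U θ r t =
      (U t' 0 ^ (p + 1) / (p + 1) - U t 0 ^ (p + 1) / (p + 1)) -
        2 * ∫ x in (0:ℝ)..r, θ x * (U t' x - U t x) := by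
  have pairing_cont : ∀ t, Continuous fun x => θ x * U t x :=
    fun t => hθ.mul (S.continuous_temp_space t)
  simp only [mul_sub, boundaryPotential]
  rw [intervalIntegral.integral_sub ((pairing_cont t').intervalIntegrable _ _)
    ((pairing_cont t).intervalIntegrable _ _)]
  ring

lemma fluxSq_le (S : StefanStrip a b σ U R) (hp : 0 ≤ p) {h t₁ t₂ L r ε : ℝ}
    (hh : 0 < h) (ha : a ≤ t₁) (h₁₂ : t₁ ≤ t₂) (hb : t₂ + h ≤ b) (hL : σ b ≤ L)
    (hr : r ∈ Icc 0 L) {θ : ℝ → ℝ} (hθ : Continuous θ)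
    (hflux : ∀ t, a ≤ t → t + h ≤ b → -(∫ y in t..t + h, R y 0) * (U (t + h) 0 - U t 0) ≤
      h * (U (t + h) 0 ^ (p + 1) / (p + 1) - U t 0 ^ (p + 1) / (p + 1)) + ε * h ^ 2) :
    fluxSq σ U R L h t₂ ≤ fluxSq σ U R L h t₁ +
      (2 * h * (∫ t in t₁..t₂, (boundaryPotential p U θ r (t + h) - boundaryPotential p U θ r t)) +
        2 * h ^ 2 * (ε + ∫ x in (0:ℝ)..r, θ x ^ 2) * (t₂ - t₁)) := by
  set k := boundaryPotential p U θ r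
  set Θ := ∫ x in (0:ℝ)..r, θ x ^ 2 with hΘ
  have k_cont : Continuous k := S.continuous_boundaryPotential hp hθ r
  have increment_cont : Continuous fun t => k (t + h) - k t :=
    (k_cont.comp (continuous_add_const h)).sub k_cont
  have majorant_deriv : ∀ t, HasDerivAt (fun y => fluxSq σ U R L h t₁ +
      (2 * h * (∫ t in t₁..y, (k (t + h) - k t)) + 2 * h ^ 2 * (ε + Θ) * (y - t₁)))
      (2 * h * (k (t + h) - k t) + 2 * h ^ 2 * (ε + Θ)) t := fun t => by
    simpa using ((((increment_cont.integral_hasStrictDerivAt t₁ t).hasDerivAt.const_mul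
      (2 * h)).add (((hasDerivAt_id t).sub_const t₁).const_mul (2 * h ^ 2 * (ε + Θ)))).const_add
        (fluxSq σ U R L h t₁))
  refine image_le_of_deriv_right_le_deriv_boundary (S.continuous_fluxSq L h).continuousOn
    (fun t ht => (S.hasDerivWithinAt_fluxSq (hr.1.trans hr.2) hh (ha.trans ht.1)
      (by linarith [ht.2])).Ici_of_Ioi) (by simp)
    (fun t _ => (majorant_deriv t).continuousAt.continuousWithinAt)
    (fun t _ => (majorant_deriv t).hasDerivWithinAt) (fun t ht => ?_) (right_mem_Icc.2 h₁₂)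
  refine (S.deriv_fluxSq_le hh (ha.trans ht.1) (by linarith [ht.2]) hL hr hθ).trans ?_
  rw [S.boundaryPotential_sub hθ, ← hΘ]
  linarith [hflux t (ha.trans ht.1) (by linarith [ht.2])]

lemma integral_extGrad_sq_le_add (S : StefanStrip a b σ U R) (hp : 1 ≤ p)
    (hbc : ∀ t ∈ Icc a b, R t 0 = -U t 0 ^ p) {t₁ t₂ L r ε : ℝ} (ha : a ≤ t₁) (h₁₂ : t₁ ≤ t₂)
    (hb : t₂ < b) (hL : σ b ≤ L) (hr : r ∈ Icc 0 L) {θ : ℝ → ℝ} (hθ : Continuous θ)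
    (hε : 0 < ε) :
    ∫ x in (0:ℝ)..L, extGrad σ R t₂ x ^ 2 ≤ (∫ x in (0:ℝ)..L, extGrad σ R t₁ x ^ 2) +
      2 * (boundaryPotential p U θ r t₂ - boundaryPotential p U θ r t₁) +
        2 * (ε + ∫ x in (0:ℝ)..r, θ x ^ 2) * (t₂ - t₁) := by
  obtain ⟨δ, hδ, hflux⟩ := S.exists_boundary_flux_mul_temp_sub_le hp hbc hε
  have hL0 : 0 ≤ L := hr.1.trans hr.2
  refine le_of_tendsto_of_tendsto (S.tendsto_fluxSq_div_sq ⟨ha.trans h₁₂, hb⟩ hL0)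
    (((S.tendsto_fluxSq_div_sq ⟨ha, h₁₂.trans_lt hb⟩ hL0).add ((tendsto_integral_shift_sub_div
      (S.continuous_boundaryPotential (by linarith) hθ r) t₁ t₂).const_mul 2)).add_const _) ?_
  filter_upwards [Ioo_mem_nhdsGT (lt_min hδ (sub_pos.2 hb))] with h hh
  have hhδ : h ≤ δ := hh.2.le.trans (min_le_left _ _)
  have hhb : t₂ + h ≤ b := by linarith [hh.2.trans_le (min_le_right _ _)]
  rw [div_le_iff₀ (pow_pos hh.1 2)]
  refine (S.fluxSq_le (by linarith) hh.1 ha h₁₂ hhb hL hr hθ (hflux h hh.1 hhδ)).trans_eq ?_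
  have := hh.1.ne'
  field_simp
  ring

-- The test function `θ` encodes the dissipation `∫∫ u_t²` by duality, avoiding time derivatives.
theorem energy_inequality (S : StefanStrip a b σ U R) (hp : 1 ≤ p)
    (hbc : ∀ t ∈ Icc a b, R t 0 = -U t 0 ^ p) {t₁ t₂ L r : ℝ} (ha : a ≤ t₁) (h₁₂ : t₁ ≤ t₂)
    (hb : t₂ < b) (hL : σ b ≤ L) (hr : r ∈ Icc 0 L) {θ : ℝ → ℝ} (hθ : Continuous θ) :
    1 / 2 * (∫ x in (0:ℝ)..L, extGrad σ R t₂ x ^ 2) - U t₂ 0 ^ (p + 1) / (p + 1) ≤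
      1 / 2 * (∫ x in (0:ℝ)..L, extGrad σ R t₁ x ^ 2) - U t₁ 0 ^ (p + 1) / (p + 1)
        - 2 * (∫ x in (0:ℝ)..r, θ x * (U t₂ x - U t₁ x))
        + (t₂ - t₁) * ∫ x in (0:ℝ)..r, θ x ^ 2 := by
  have limit : Tendsto (fun ε => (∫ x in (0:ℝ)..L, extGrad σ R t₁ x ^ 2) +
      2 * (boundaryPotential p U θ r t₂ - boundaryPotential p U θ r t₁) +
        2 * (ε + ∫ x in (0:ℝ)..r, θ x ^ 2) * (t₂ - t₁)) (𝓝[>] 0) (𝓝 _) :=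
    Continuous.tendsto' (by fun_prop) 0 _ rfl |>.mono_left nhdsWithin_le_nhds
  have dirichlet_le := ge_of_tendsto limit (by
    filter_upwards [self_mem_nhdsWithin] with ε hε
    exact S.integral_extGrad_sq_le_add hp hbc ha h₁₂ hb hL hr hθ hε)
  rw [S.boundaryPotential_sub hθ] at dirichlet_le
  linarith

end StefanStrip

/-! ### Classical solutions form strips -/

namespace IsSolOn

variable {p s₀ T : ℝ} {φ s : ℝ → ℝ} {u : ℝ → ℝ → ℝ}

lemma continuousOn_temp (H : IsSolOn p s₀ φ T s u) {t : ℝ} (ht : t ∈ Icc 0 T) :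
    ContinuousOn (u t) (Icc 0 (s t)) :=
  H.u_cont.comp (f := fun x : ℝ => (t, x)) (by fun_prop) fun _ hx => ⟨ht, hx⟩

lemma continuousOn_deriv_temp (H : IsSolOn p s₀ φ T s u) {t : ℝ} (ht : t ∈ Ioc 0 T) :
    ContinuousOn (deriv (u t)) (Icc 0 (s t)) :=
  H.ux_cont.comp (f := fun x : ℝ => (t, x)) (by fun_prop) fun _ hx => ⟨ht, hx⟩

lemma deriv_temp_front_nonpos (H : IsSolOn p s₀ φ T s u) {t : ℝ} (ht : t ∈ Ioc 0 T) :
    deriv (u t) (s t) ≤ 0 := by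
  by_contra! hpos
  have hs := H.s_pos t ⟨ht.1.le, ht.2⟩
  have near_front : ∀ᶠ x in 𝓝[≤] s t, x ∈ Icc 0 (s t) := Icc_mem_nhdsLE hs
  have deriv_pos : ∀ᶠ x in 𝓝[≤] s t, 0 < deriv (u t) x :=
    ((H.continuousOn_deriv_temp ht (s t) ⟨hs.le, le_rfl⟩).eventually_const_lt hpos).filter_mono
      (nhdsWithin_le_of_mem near_front)
  obtain ⟨c, hc, hcs⟩ := mem_nhdsLE_iff_exists_Icc_subset.1 (near_front.and deriv_pos)
  have increasing : StrictMonoOn (u t) (Icc c (s t)) := by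
    refine strictMonoOn_of_deriv_pos (convex_Icc _ _)
      ((H.continuousOn_temp ⟨ht.1.le, ht.2⟩).mono fun x hx => (hcs hx).1) fun x hx => ?_
    exact (hcs (interior_subset hx)).2
  have hlt := increasing ⟨le_rfl, le_of_lt hc⟩ ⟨le_of_lt hc, le_rfl⟩ hc
  rw [H.bc_free t ht] at hlt
  exact hlt.not_ge (H.u_nonneg t ⟨ht.1.le, ht.2⟩ c (hcs ⟨le_rfl, le_of_lt hc⟩).1)

lemma monotoneOn_front (H : IsSolOn p s₀ φ T s u) : MonotoneOn s (Icc 0 T) := by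
  refine monotoneOn_of_deriv_nonneg (convex_Icc _ _) H.s_cont (fun t ht => ?_) fun t ht => ?_
  all_goals rw [interior_Icc] at ht
  · exact (H.s_diff t ⟨ht.1, ht.2.le⟩).differentiableWithinAt
  · rw [H.stefan t ⟨ht.1, ht.2.le⟩]
    exact neg_nonneg.2 (H.deriv_temp_front_nonpos ⟨ht.1, ht.2.le⟩)

lemma integral_deriv_deriv_temp (H : IsSolOn p s₀ φ T s u) {t t' z : ℝ} (ht : 0 < t)
    (htt' : t ≤ t') (ht' : t' ≤ T) (hz : z ∈ Ioo 0 (s t)) :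
    ∫ τ in t..t', deriv (deriv (u τ)) z = u t' z - u t z := by
  have inside : ∀ τ ∈ Icc t t', τ ∈ Ioc 0 T ∧ z ∈ Ioo 0 (s τ) := fun τ hτ =>
    ⟨⟨ht.trans_le hτ.1, hτ.2.trans ht'⟩, hz.1, hz.2.trans_le (H.monotoneOn_front
      ⟨ht.le, htt'.trans ht'⟩ ⟨(ht.trans_le hτ.1).le, hτ.2.trans ht'⟩ hτ.1)⟩
  refine intervalIntegral.integral_eq_sub_of_hasDerivAt (f := fun τ => u τ z) (fun τ hτ => ?_) ?_
  · rw [uIcc_of_le htt'] at hτ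
    obtain ⟨hτT, hzτ⟩ := inside τ hτ
    exact H.heat τ hτT z hzτ ▸ (H.ut_diff τ hτT z hzτ).hasDerivAt
  · exact (H.uxx_cont.comp (f := fun τ : ℝ => (τ, z)) (by fun_prop)
      inside).intervalIntegrable_of_Icc htt'

lemma hasDerivAt_integral_deriv_temp (H : IsSolOn p s₀ φ T s u) {t t' z : ℝ} (ht : 0 < t)
    (htt' : t ≤ t') (ht' : t' ≤ T) (hz : z ∈ Ioo 0 (s t)) :
    HasDerivAt (fun y => ∫ τ in t..t', deriv (u τ) y) (u t' z - u t z) z := by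
  have inside : ∀ τ ∈ Icc t t', ∀ w ∈ Ioo 0 (s t), τ ∈ Ioc 0 T ∧ w ∈ Ioo 0 (s τ) :=
    fun τ hτ w hw => ⟨⟨ht.trans_le hτ.1, hτ.2.trans ht'⟩, hw.1, hw.2.trans_le (H.monotoneOn_front
      ⟨ht.le, htt'.trans ht'⟩ ⟨(ht.trans_le hτ.1).le, hτ.2.trans ht'⟩ hτ.1)⟩
  obtain ⟨ε, hε, hball⟩ := Metric.nhds_basis_closedBall.mem_iff.1 (Ioo_mem_nhds hz.1 hz.2)
  have uxx_cont : ContinuousOn (fun q : ℝ × ℝ => deriv (deriv (u q.1)) q.2)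
      (Icc t t' ×ˢ Metric.closedBall z ε) :=
    H.uxx_cont.mono fun q hq => inside q.1 hq.1 q.2 (hball hq.2)
  obtain ⟨C, hC⟩ := (isCompact_Icc.prod (isCompact_closedBall z ε)).exists_bound_of_continuousOn
    uxx_cont
  have ux_cont_time : ∀ y ∈ Ioo 0 (s t), ContinuousOn (fun τ => deriv (u τ) y) (Icc t t') :=
    fun y hy => H.ux_cont.comp (f := fun τ : ℝ => (τ, y)) (by fun_prop) fun τ hτ =>
      ⟨(inside τ hτ y hy).1, Ioo_subset_Icc_self (inside τ hτ y hy).2⟩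
  rw [← H.integral_deriv_deriv_temp ht htt' ht' hz]
  refine (intervalIntegral.hasDerivAt_integral_of_dominated_loc_of_deriv_le
    (F' := fun y τ => deriv (deriv (u τ)) y) (bound := fun _ => C)
    (Metric.closedBall_mem_nhds z hε) ?_ ((ux_cont_time z hz).intervalIntegrable_of_Icc htt')
    ?_ (.of_forall fun τ hτ w hw => ?_) intervalIntegrable_const
    (.of_forall fun τ hτ w hw => ?_)).2
  all_goals rw [uIoc_of_le htt'] at *
  · filter_upwards [Ioo_mem_nhds hz.1 hz.2] with y hy
    exact ((ux_cont_time y hy).mono Ioc_subset_Icc_self).aestronglyMeasurable measurableSet_Ioc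
  · exact ((uxx_cont.comp (f := fun τ : ℝ => (τ, z)) (by fun_prop) fun τ hτ => ⟨hτ,
      Metric.mem_closedBall_self hε.le⟩).mono Ioc_subset_Icc_self).aestronglyMeasurable
        measurableSet_Ioc
  · exact hC (τ, w) ⟨⟨hτ.1.le, hτ.2⟩, hw⟩
  · obtain ⟨hτT, hwτ⟩ := inside τ ⟨hτ.1.le, hτ.2⟩ w (hball hw)
    exact (H.uxx_diff τ hτT w hwτ).hasDerivAt

lemma front_sub_eq_integral (H : IsSolOn p s₀ φ T s u) {t t' : ℝ} (ht : 0 < t) (htt' : t ≤ t')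
    (ht' : t' ≤ T) : s t' - s t = -∫ τ in t..t', deriv (u τ) (s τ) := by
  have mem : ∀ τ ∈ Icc t t', τ ∈ Ioc 0 T := fun τ hτ => ⟨ht.trans_le hτ.1, hτ.2.trans ht'⟩
  have front_int : IntervalIntegrable (deriv s) volume t t' :=
    (H.s_deriv_cont.mono mem).intervalIntegrable_of_Icc htt'
  rw [← intervalIntegral.integral_neg, ← intervalIntegral.integral_eq_sub_of_hasDerivAt
    (fun τ hτ => (H.s_diff τ (mem τ (uIcc_of_le htt' ▸ hτ))).hasDerivAt) front_int]
  exact intervalIntegral.integral_congr fun τ hτ => H.stefan τ (mem τ (uIcc_of_le htt' ▸ hτ))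

end IsSolOn

/-- The point of `[a,b]` nearest to `t`, for `a ≤ b`. -/
def clamp (a b t : ℝ) : ℝ := max a (min t b)

lemma clamp_mem_Icc {a b : ℝ} (h : a ≤ b) (t : ℝ) : clamp a b t ∈ Icc a b :=
  ⟨le_max_left _ _, max_le h (min_le_right _ _)⟩

lemma clamp_eq_self {a b t : ℝ} (h : t ∈ Icc a b) : clamp a b t = t := by
  rw [clamp, min_eq_left h.2, max_eq_right h.1]

lemma clamp_eq_right {a b t : ℝ} (hab : a ≤ b) (ht : b ≤ t) : clamp a b t = b := by
  rw [clamp, min_eq_right ht, max_eq_right hab]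

lemma monotone_clamp (a b : ℝ) : Monotone (clamp a b) := fun _ _ h =>
  max_le_max le_rfl (min_le_min h le_rfl)

/-- The function `v`, given for times in `[a,b]` and positions in `[0,s(t)]`, extended to the plane
by moving its arguments to the nearest admissible time and then the nearest admissible position. -/
def stripExtend (s : ℝ → ℝ) (v : ℝ → ℝ → ℝ) (a b t x : ℝ) : ℝ :=
  v (clamp a b t) (clamp 0 (s (clamp a b t)) x)

lemma stripExtend_eq {s : ℝ → ℝ} {v : ℝ → ℝ → ℝ} {a b t x : ℝ} (ht : t ∈ Icc a b)
    (hx : x ∈ Icc 0 (s t)) : stripExtend s v a b t x = v t x := by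
  rw [stripExtend, clamp_eq_self ht, clamp_eq_self hx]

namespace IsSolOn

variable {p s₀ a b : ℝ} {φ s : ℝ → ℝ} {u : ℝ → ℝ → ℝ}

lemma clamp_mem (ha : 0 < a) (hab : a < b) (t : ℝ) : clamp a b t ∈ Ioc 0 b :=
  ⟨ha.trans_le (clamp_mem_Icc hab.le t).1, (clamp_mem_Icc hab.le t).2⟩

lemma continuous_front_clamp (H : IsSolOn p s₀ φ b s u) (ha : 0 < a) (hab : a < b) :
    Continuous fun t => s (clamp a b t) :=
  H.s_cont.comp_continuous (by unfold clamp; fun_prop) fun t =>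
    Ioc_subset_Icc_self (clamp_mem ha hab t)

lemma continuous_stripExtend (H : IsSolOn p s₀ φ b s u) (ha : 0 < a) (hab : a < b)
    {v : ℝ → ℝ → ℝ} (hv : ContinuousOn (fun q : ℝ × ℝ => v q.1 q.2)
      {q : ℝ × ℝ | q.1 ∈ Ioc 0 b ∧ q.2 ∈ Icc 0 (s q.1)}) :
    Continuous fun q : ℝ × ℝ => stripExtend s v a b q.1 q.2 := by
  have front_cont := (H.continuous_front_clamp ha hab).comp (continuous_fst (X := ℝ) (Y := ℝ))
  refine hv.comp_continuous (f := fun q : ℝ × ℝ =>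
    (clamp a b q.1, clamp 0 (s (clamp a b q.1)) q.2)) ?_ fun q => ⟨clamp_mem ha hab q.1,
      clamp_mem_Icc (H.s_pos _ (Ioc_subset_Icc_self (clamp_mem ha hab q.1))).le q.2⟩
  exact (by unfold clamp; fun_prop : Continuous fun q : ℝ × ℝ => clamp a b q.1).prodMk
    (continuous_const.max (continuous_snd.min front_cont))

lemma integral_temp_sub_eq (H : IsSolOn p s₀ φ b s u) (ha : 0 < a) {t t' y : ℝ} (hat : a ≤ t)
    (htt' : t ≤ t') (ht'b : t' ≤ b) (hy : y ∈ Icc 0 (s t)) :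
    ∫ x in (0:ℝ)..y, (u t' x - u t x) = ∫ τ in t..t', (deriv (u τ) y - deriv (u τ) 0) := by
  rcases htt'.eq_or_lt with rfl | hlt
  · simp
  have ht : 0 < t := ha.trans_le hat
  have hab : a < b := hat.trans_lt (hlt.trans_le ht'b)
  have front_le : ∀ τ ∈ Icc t t', s t ≤ s τ := fun τ hτ => H.monotoneOn_front
    ⟨ht.le, htt'.trans ht'b⟩ ⟨ht.le.trans hτ.1, hτ.2.trans ht'b⟩ hτ.1
  have ext_eq : ∀ x ∈ Icc 0 (s t), ∫ τ in t..t', stripExtend s (fun t => deriv (u t)) a b τ x =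
      ∫ τ in t..t', deriv (u τ) x := fun x hx => intervalIntegral.integral_congr fun τ hτ => by
    rw [uIcc_of_le htt'] at hτ
    exact stripExtend_eq ⟨hat.trans hτ.1, hτ.2.trans ht'b⟩ ⟨hx.1, hx.2.trans (front_le τ hτ)⟩
  have flux_cont : ContinuousOn (fun y => ∫ τ in t..t', deriv (u τ) y) (Icc 0 (s t)) :=
    (intervalIntegral.continuous_parametric_intervalIntegral_of_continuous'
      (f := fun x τ => stripExtend s (fun t => deriv (u t)) a b τ x)
      ((H.continuous_stripExtend ha hab H.ux_cont).comp continuous_swap) t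
      t').continuousOn.congr fun x hx => (ext_eq x hx).symm
  have ux_int : ∀ x ∈ Icc 0 (s t), IntervalIntegrable (fun τ => deriv (u τ) x) volume t t' :=
    fun x hx => (H.ux_cont.comp (f := fun τ : ℝ => (τ, x)) (by fun_prop) fun τ hτ =>
      ⟨⟨ht.trans_le hτ.1, hτ.2.trans ht'b⟩, hx.1,
        hx.2.trans (front_le τ hτ)⟩).intervalIntegrable_of_Icc htt'
  have temp_cont : ContinuousOn (fun x => u t' x - u t x) (Icc 0 y) :=
    ((H.continuousOn_temp ⟨ht.le.trans htt', ht'b⟩).mono (Icc_subset_Icc_right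
      (hy.2.trans (front_le t' ⟨htt', le_rfl⟩)))).sub
      ((H.continuousOn_temp ⟨ht.le, htt'.trans ht'b⟩).mono (Icc_subset_Icc_right hy.2))
  rw [intervalIntegral.integral_eq_sub_of_hasDerivAt_of_le hy.1
    (flux_cont.mono (Icc_subset_Icc_right hy.2))
    (fun z hz => H.hasDerivAt_integral_deriv_temp ht htt' ht'b ⟨hz.1, hz.2.trans_le hy.2⟩)
    (temp_cont.intervalIntegrable_of_Icc hy.1),
    intervalIntegral.integral_sub (ux_int y hy) (ux_int 0 ⟨le_rfl, hy.1.trans hy.2⟩)]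

lemma stefanStrip (H : IsSolOn p s₀ φ b s u) (ha : 0 < a) (hab : a < b) :
    StefanStrip a b (fun t => s (clamp a b t)) (stripExtend s u a b)
      (stripExtend s (fun t => deriv (u t)) a b) where
  front_continuous := H.continuous_front_clamp ha hab
  front_monotone t t' h := H.monotoneOn_front (Ioc_subset_Icc_self (clamp_mem ha hab t))
    (Ioc_subset_Icc_self (clamp_mem ha hab t')) (monotone_clamp a b h)
  front_pos t := H.s_pos _ (Ioc_subset_Icc_self (clamp_mem ha hab t))
  temp_continuous := H.continuous_stripExtend ha hab
    (H.u_cont.mono fun _ hq => ⟨Ioc_subset_Icc_self hq.1, hq.2⟩)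
  grad_continuous := H.continuous_stripExtend ha hab H.ux_cont
  temp_nonneg t x := H.u_nonneg _ (Ioc_subset_Icc_self (clamp_mem ha hab t)) _
    (clamp_mem_Icc (H.s_pos _ (Ioc_subset_Icc_self (clamp_mem ha hab t))).le x)
  temp_eq_zero t x hx := by
    rw [stripExtend, clamp_eq_right (H.s_pos _ (Ioc_subset_Icc_self (clamp_mem ha hab t))).le hx]
    exact H.bc_free _ (clamp_mem ha hab t)
  temp_hasDerivAt t ht x hx := by
    rw [clamp_eq_self ht] at hx
    rw [stripExtend_eq ht (Ioo_subset_Icc_self hx)]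
    refine (H.ux_diff t ⟨ha.trans_le ht.1, ht.2⟩ x hx).hasDerivAt.congr_of_eventuallyEq ?_
    filter_upwards [Ioo_mem_nhds hx.1 hx.2] with z hz
    exact stripExtend_eq ht (Ioo_subset_Icc_self hz)
  integral_temp_sub t ht t' ht' htt' y hy := by
    rw [clamp_eq_self ht] at hy
    have front_le : ∀ τ ∈ Icc t t', s t ≤ s τ := fun τ hτ => H.monotoneOn_front
      ⟨ha.le.trans ht.1, ht.2⟩ ⟨ha.le.trans (ht.1.trans hτ.1), hτ.2.trans ht'.2⟩ hτ.1
    refine Eq.trans (intervalIntegral.integral_congr fun x hx => ?_)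
      ((H.integral_temp_sub_eq ha ht.1 htt' ht'.2 hy).trans
        (intervalIntegral.integral_congr fun τ hτ => ?_))
    · rw [uIcc_of_le hy.1] at hx
      rw [stripExtend_eq ht' ⟨hx.1, (hx.2.trans hy.2).trans (front_le t' ⟨htt', le_rfl⟩)⟩,
        stripExtend_eq ht ⟨hx.1, hx.2.trans hy.2⟩]
    · rw [uIcc_of_le htt'] at hτ
      have hτ_mem : τ ∈ Icc a b := ⟨ht.1.trans hτ.1, hτ.2.trans ht'.2⟩
      rw [stripExtend_eq hτ_mem ⟨hy.1, hy.2.trans (front_le τ hτ)⟩,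
        stripExtend_eq hτ_mem ⟨le_rfl, (hy.1.trans hy.2).trans (front_le τ hτ)⟩]
  front_sub t ht t' ht' htt' := by
    rw [clamp_eq_self ht, clamp_eq_self ht',
      H.front_sub_eq_integral (ha.trans_le ht.1) htt' ht'.2]
    congr 1
    refine intervalIntegral.integral_congr fun τ hτ => ?_
    rw [uIcc_of_le htt'] at hτ
    have hτ_mem : τ ∈ Icc a b := ⟨ht.1.trans hτ.1, hτ.2.trans ht'.2⟩
    rw [clamp_eq_self hτ_mem, stripExtend_eq hτ_mem
      ⟨(H.s_pos τ ⟨ha.le.trans hτ_mem.1, hτ_mem.2⟩).le, le_rfl⟩]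

lemma stripExtend_deriv_zero (H : IsSolOn p s₀ φ b s u) (ha : 0 < a) {t : ℝ} (ht : t ∈ Icc a b) :
    stripExtend s (fun t => deriv (u t)) a b t 0 = -stripExtend s u a b t 0 ^ p := by
  have hs : (0 : ℝ) ∈ Icc 0 (s t) := ⟨le_rfl, (H.s_pos t ⟨ha.le.trans ht.1, ht.2⟩).le⟩
  rw [stripExtend_eq ht hs, stripExtend_eq ht hs, ← H.bc_zero t ⟨ha.trans_le ht.1, ht.2⟩, neg_neg]

end IsSolOn

/-! ### The maximum principle -/

lemma deriv_deriv_nonpos_of_isLocalMax {f : ℝ → ℝ} {x : ℝ} (hmax : IsLocalMax f x)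
    (hf : ContinuousAt f x) : deriv (deriv f) x ≤ 0 := by
  by_contra! hpos
  have hmin := isLocalMin_of_deriv_deriv_pos hpos hmax.deriv_eq_zero hf
  have locally_const : f =ᶠ[𝓝 x] fun _ => f x := by
    filter_upwards [hmax, hmin] with y h₁ h₂ using le_antisymm h₁ h₂
  exact hpos.ne' (locally_const.deriv.deriv_eq.trans (by simp))

lemma hasDerivAt_nonneg_of_eventually_le_left {f : ℝ → ℝ} {f' t : ℝ} (hf : HasDerivAt f f' t)
    (hle : ∀ᶠ τ in 𝓝[<] t, f τ ≤ f t) : 0 ≤ f' := by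
  refine ge_of_tendsto ((hasDerivAt_iff_tendsto_slope.1 hf).mono_left
    (nhdsWithin_mono t (show Iio t ⊆ {t}ᶜ from fun τ hτ => ne_of_lt hτ))) ?_
  filter_upwards [hle, self_mem_nhdsWithin] with τ hfτ hτ
  rw [slope_def_field]
  exact div_nonneg_of_nonpos (sub_nonpos.2 hfτ) (sub_nonpos.2 (le_of_lt hτ))

lemma exists_lt_of_deriv_right_pos {f f' : ℝ → ℝ} {a b : ℝ} (hab : a < b)
    (hf : ContinuousOn f (Icc a b)) (hff' : ∀ x ∈ Ioo a b, HasDerivAt f (f' x) x)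
    (hf' : ContinuousWithinAt f' (Icc a b) a) (hpos : 0 < f' a) : ∃ x ∈ Icc a b, f a < f x := by
  have near : ∀ᶠ x in 𝓝[≥] a, x ∈ Ico a b := Ico_mem_nhdsGE hab
  have deriv_pos : ∀ᶠ x in 𝓝[≥] a, 0 < f' x :=
    (hf'.eventually_const_lt hpos).filter_mono (nhdsWithin_le_of_mem (Icc_mem_nhdsGE hab))
  obtain ⟨c, hac, hc⟩ := mem_nhdsGE_iff_exists_Icc_subset.1 (near.and deriv_pos)
  have hcb : Icc a c ⊆ Icc a b := fun x hx => Ico_subset_Icc_self (hc hx).1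
  have increasing : StrictMonoOn f (Icc a c) := by
    refine strictMonoOn_of_deriv_pos (convex_Icc _ _) (hf.mono hcb) fun x hx => ?_
    rw [interior_Icc] at hx
    obtain ⟨hx_near, hx_pos⟩ := hc (Ioo_subset_Icc_self hx)
    rwa [(hff' x ⟨hx.1, hx_near.2⟩).deriv]
  exact ⟨c, hcb (right_mem_Icc.2 (le_of_lt hac)),
    increasing (left_mem_Icc.2 (le_of_lt hac)) (right_mem_Icc.2 (le_of_lt hac)) hac⟩

namespace IsSolOn

variable {p s₀ T : ℝ} {φ s : ℝ → ℝ} {u : ℝ → ℝ → ℝ}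

lemma isCompact_domain (H : IsSolOn p s₀ φ T s u) :
    IsCompact {q : ℝ × ℝ | q.1 ∈ Icc 0 T ∧ q.2 ∈ Icc 0 (s q.1)} := by
  have rescale_cont : ContinuousOn (fun q : ℝ × ℝ => (q.1, q.2 * s q.1)) (Icc 0 T ×ˢ Icc 0 1) :=
    continuousOn_fst.prodMk (continuousOn_snd.mul (H.s_cont.comp continuousOn_fst fun q hq => hq.1))
  convert (isCompact_Icc.prod isCompact_Icc).image_of_continuousOn rescale_cont using 1
  ext ⟨t, x⟩
  simp only [mem_ofPred_eq, mem_image, mem_prod, Prod.exists, Prod.mk.injEq]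
  constructor
  · rintro ⟨ht, hx⟩
    have hs := H.s_pos t ht
    exact ⟨t, x / s t, ⟨ht, div_nonneg hx.1 hs.le, (div_le_one hs).2 hx.2⟩, rfl,
      div_mul_cancel₀ x hs.ne'⟩
  · rintro ⟨t, y, ⟨ht, hy⟩, rfl, rfl⟩
    have hs := H.s_pos t ht
    exact ⟨ht, mul_nonneg hy.1 hs.le, mul_le_of_le_one_left hs.le hy.2⟩

section Barrier

variable {w w_t w_x w_xx : ℝ → ℝ → ℝ}

lemma deriv_time_ge_of_max_sub (H : IsSolOn p s₀ φ T s u)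
    (hwt : ∀ t x, HasDerivAt (fun τ => w τ x) (w_t t x) t) {t x : ℝ} (ht : t ∈ Ioc 0 T)
    (hx : x ∈ Ioo 0 (s t))
    (hmax : ∀ τ ∈ Icc 0 T, ∀ y ∈ Icc 0 (s τ), u τ y - w τ y ≤ u t x - w t x) :
    w_t t x ≤ deriv (fun τ => u τ x) t := by
  refine sub_nonneg.1 (hasDerivAt_nonneg_of_eventually_le_left
    ((H.ut_diff t ht x hx).hasDerivAt.sub (hwt t x)) ?_)
  have nhds_le : 𝓝[<] t ≤ 𝓝[Icc 0 T] t := by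
    rw [← nhdsWithin_Ioo_eq_nhdsLT ht.1]
    exact nhdsWithin_mono _ fun y hy => ⟨hy.1.le, hy.2.le.trans ht.2⟩
  have inside : ∀ᶠ τ in 𝓝[<] t, x < s τ :=
    ((H.s_cont t ⟨ht.1.le, ht.2⟩).eventually_const_lt hx.2).filter_mono nhds_le
  filter_upwards [inside, Ioo_mem_nhdsLT ht.1] with τ hxτ hτ
  exact hmax τ ⟨hτ.1.le, hτ.2.le.trans ht.2⟩ x ⟨hx.1.le, hxτ.le⟩

lemma deriv_deriv_le_of_max_sub (H : IsSolOn p s₀ φ T s u)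
    (hwx : ∀ t x, HasDerivAt (w t) (w_x t x) x)
    (hwxx : ∀ t x, HasDerivAt (w_x t) (w_xx t x) x) {t x : ℝ} (ht : t ∈ Ioc 0 T)
    (hx : x ∈ Ioo 0 (s t)) (hmax : ∀ y ∈ Icc 0 (s t), u t y - w t y ≤ u t x - w t x) :
    deriv (deriv (u t)) x ≤ w_xx t x := by
  have hderiv : ∀ y ∈ Ioo 0 (s t), HasDerivAt (u t - w t) (deriv (u t) y - w_x t y) y :=
    fun y hy => (H.ux_diff t ht y hy).hasDerivAt.sub (hwx t y)
  have hlocal : IsLocalMax (u t - w t) x := by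
    filter_upwards [Ioo_mem_nhds hx.1 hx.2] with y hy using hmax y (Ioo_subset_Icc_self hy)
  have deriv_eq : deriv (u t - w t) =ᶠ[𝓝 x] deriv (u t) - w_x t := by
    filter_upwards [Ioo_mem_nhds hx.1 hx.2] with y hy using (hderiv y hy).deriv
  have := deriv_deriv_nonpos_of_isLocalMax hlocal (hderiv x hx).continuousAt
  rw [deriv_eq.deriv_eq, ((H.uxx_diff t ht x hx).hasDerivAt.sub (hwxx t x)).deriv] at this
  exact sub_nonpos.1 this

lemma deriv_zero_le_of_max_sub (H : IsSolOn p s₀ φ T s u)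
    (hwx : ∀ t x, HasDerivAt (w t) (w_x t x) x)
    (hwxx : ∀ t x, HasDerivAt (w_x t) (w_xx t x) x) {t : ℝ} (ht : t ∈ Ioc 0 T)
    (hmax : ∀ y ∈ Icc 0 (s t), u t y - w t y ≤ u t 0 - w t 0) : deriv (u t) 0 ≤ w_x t 0 := by
  by_contra! hlt
  have hs := H.s_pos t ⟨ht.1.le, ht.2⟩
  obtain ⟨y, hy, hgt⟩ := exists_lt_of_deriv_right_pos (f := u t - w t)
    (f' := deriv (u t) - w_x t) hs
    ((H.continuousOn_temp ⟨ht.1.le, ht.2⟩).sub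
      fun y _ => (hwx t y).continuousAt.continuousWithinAt)
    (fun y hy => (H.ux_diff t ht y hy).hasDerivAt.sub (hwx t y))
    ((H.continuousOn_deriv_temp ht 0 (left_mem_Icc.2 hs.le)).sub
      (hwxx t 0).continuousAt.continuousWithinAt)
    (sub_pos.2 hlt)
  exact hgt.not_ge (hmax y hy)

lemma temp_le_of_strict_supersolution (H : IsSolOn p s₀ φ T s u)
    (hw : Continuous fun q : ℝ × ℝ => w q.1 q.2)
    (hwt : ∀ t x, HasDerivAt (fun τ => w τ x) (w_t t x) t)
    (hwx : ∀ t x, HasDerivAt (w t) (w_x t x) x)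
    (hwxx : ∀ t x, HasDerivAt (w_x t) (w_xx t x) x)
    (strict : ∀ t ∈ Ioc 0 T, ∀ x ∈ Ioo 0 (s t), w_xx t x < w_t t x)
    (initial : ∀ x ∈ Icc 0 s₀, φ x ≤ w 0 x)
    (front : ∀ t ∈ Ioc 0 T, 0 ≤ w t (s t))
    (fixed : ∀ t ∈ Ioc 0 T, w_x t 0 < deriv (u t) 0 ∨ u t 0 ≤ w t 0) :
    ∀ t ∈ Icc 0 T, ∀ x ∈ Icc 0 (s t), u t x ≤ w t x := by
  obtain ⟨⟨t, x⟩, ⟨ht, hx⟩, hmaxOn⟩ := H.isCompact_domain.exists_isMaxOn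
    ⟨(0, 0), left_mem_Icc.2 H.T_pos.le, left_mem_Icc.2 (H.s_pos 0 (left_mem_Icc.2 H.T_pos.le)).le⟩
    (H.u_cont.sub hw.continuousOn)
  have hmax : ∀ τ ∈ Icc 0 T, ∀ y ∈ Icc 0 (s τ), u τ y - w τ y ≤ u t x - w t x :=
    fun τ hτ y hy => hmaxOn (a := (τ, y)) ⟨hτ, hy⟩
  suffices hz : u t x ≤ w t x from fun τ hτ y hy =>
    sub_nonpos.1 ((hmax τ hτ y hy).trans (sub_nonpos.2 hz))
  dsimp only at ht hx
  by_contra! hpos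
  have t_pos : 0 < t := by
    refine ht.1.lt_of_ne ?_
    rintro rfl
    rw [H.init_s] at hx
    exact hpos.not_ge (H.init x hx ▸ initial x hx)
  have htT : t ∈ Ioc 0 T := ⟨t_pos, ht.2⟩
  have x_lt : x < s t := by
    refine hx.2.lt_of_ne ?_
    rintro rfl
    exact hpos.not_ge (H.bc_free t htT ▸ front t htT)
  have x_pos : 0 < x := by
    refine hx.1.lt_of_ne ?_
    rintro rfl
    exact (fixed t htT).elim
      (fun h => h.not_ge (H.deriv_zero_le_of_max_sub hwx hwxx htT (hmax t ht))) hpos.not_ge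
  have := H.deriv_time_ge_of_max_sub hwt htT ⟨x_pos, x_lt⟩ hmax
  rw [H.heat t htT x ⟨x_pos, x_lt⟩] at this
  exact (strict t htT x ⟨x_pos, x_lt⟩).not_ge
    (this.trans (H.deriv_deriv_le_of_max_sub hwx hwxx htT ⟨x_pos, x_lt⟩ (hmax t ht)))

end Barrier

lemma temp_le_quadratic (H : IsSolOn p s₀ φ T s u) {A b c d : ℝ} (hcd : 2 * c < d)
    (initial : ∀ x ∈ Icc 0 s₀, φ x ≤ A + b * x + c * x ^ 2)
    (front : ∀ t ∈ Ioc 0 T, 0 ≤ A + b * s t + c * s t ^ 2 + d * t)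
    (fixed : ∀ t ∈ Ioc 0 T, b < deriv (u t) 0 ∨ u t 0 ≤ A + d * t) :
    ∀ t ∈ Icc 0 T, ∀ x ∈ Icc 0 (s t), u t x ≤ A + b * x + c * x ^ 2 + d * t := by
  refine H.temp_le_of_strict_supersolution (w := fun t x => A + b * x + c * x ^ 2 + d * t)
    (w_t := fun _ _ => d) (w_x := fun _ x => b + 2 * c * x) (w_xx := fun _ _ => 2 * c)
    (by fun_prop) (fun t x => ?_) (fun t x => ?_) (fun t x => ?_) (fun _ _ _ _ => hcd)
    (by simpa using initial) front (by simpa using fixed)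
  · simpa using ((hasDerivAt_id t).const_mul d).const_add (A + b * x + c * x ^ 2)
  · have := ((((hasDerivAt_id x).const_mul b).const_add A).add
      (((hasDerivAt_id x).pow 2).const_mul c)).add_const (d * t)
    refine this.congr_deriv ?_
    simp only [id]
    ring
  · simpa using ((hasDerivAt_id x).const_mul (2 * c)).const_add b

lemma temp_le_of_temp_zero_le (H : IsSolOn p s₀ φ T s u) {A : ℝ} (hA : 0 ≤ A)
    (initial : ∀ x ∈ Icc 0 s₀, φ x ≤ A) (fixed : ∀ t ∈ Ioc 0 T, u t 0 ≤ A) :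
    ∀ t ∈ Icc 0 T, ∀ x ∈ Icc 0 (s t), u t x ≤ A := by
  intro t ht x hx
  have le_tilted : ∀ d : ℝ, 0 < d → u t x ≤ A + d * t := by
    intro d hd
    have drift_nonneg : ∀ t ∈ Ioc 0 T, 0 ≤ d * t := fun t ht => mul_nonneg hd.le ht.1.le
    simpa using H.temp_le_quadratic (A := A) (b := 0) (c := 0) (by linarith)
      (by simpa using initial) (fun t ht => by linarith [drift_nonneg t ht])
      (fun t ht => .inr (by linarith [drift_nonneg t ht, fixed t ht])) t ht x hx
  refine le_of_forall_pos_le_add fun ε hε => (le_tilted (ε / T) (div_pos hε H.T_pos)).trans ?_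
  have : ε / T * t ≤ ε / T * T := mul_le_mul_of_nonneg_left ht.2 (div_pos hε H.T_pos).le
  rw [div_mul_cancel₀ ε H.T_pos.ne'] at this
  linarith

end IsSolOn

/-! ### Energy and first moment of a solution -/

lemma integral_sub_mul_eq_integral_integral {f : ℝ → ℝ} (hf : Continuous f) (r : ℝ) :
    ∫ x in (0:ℝ)..r, (r - x) * f x = ∫ y in (0:ℝ)..r, ∫ x in (0:ℝ)..y, f x := by
  have primitive : ∀ y, HasDerivAt (fun y => ∫ x in (0:ℝ)..y, f x) (f y) y :=
    fun y => (hf.integral_hasStrictDerivAt 0 y).hasDerivAt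
  have parts := intervalIntegral.integral_mul_deriv_eq_deriv_mul (a := 0) (b := r)
    (u := fun x => r - x) (u' := fun _ => -1) (fun y _ => (hasDerivAt_id y).const_sub r)
    (fun y _ => primitive y) intervalIntegrable_const (hf.intervalIntegrable _ _)
  simpa using parts

lemma StefanStrip.integral_sub_mul_temp_sub {a b : ℝ} {σ : ℝ → ℝ} {U R : ℝ → ℝ → ℝ}
    (S : StefanStrip a b σ U R) {t t' r : ℝ} (ht : t ∈ Icc a b) (ht' : t' ∈ Icc a b)
    (htt' : t ≤ t') (hr : r ∈ Icc 0 (σ t)) :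
    ∫ x in (0:ℝ)..r, (r - x) * (U t' x - U t x) =
      ∫ τ in t..t', (U τ r - U τ 0 - r * R τ 0) := by
  have diff_cont : Continuous fun q : ℝ × ℝ => R q.2 q.1 - R q.2 0 :=
    (S.grad_continuous.comp (by fun_prop : Continuous fun q : ℝ × ℝ => (q.2, q.1))).sub
      (S.grad_continuous.comp (by fun_prop : Continuous fun q : ℝ × ℝ => (q.2, (0 : ℝ))))
  calc ∫ x in (0:ℝ)..r, (r - x) * (U t' x - U t x)
      = ∫ y in (0:ℝ)..r, ∫ x in (0:ℝ)..y, (U t' x - U t x) :=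
        integral_sub_mul_eq_integral_integral
          ((S.continuous_temp_space t').sub (S.continuous_temp_space t)) r
    _ = ∫ y in (0:ℝ)..r, ∫ τ in t..t', (R τ y - R τ 0) :=
        intervalIntegral.integral_congr fun y hy => by
          rw [uIcc_of_le hr.1] at hy
          exact S.integral_temp_sub t ht t' ht' htt' y ⟨hy.1, hy.2.trans hr.2⟩
    _ = ∫ τ in t..t', ∫ y in (0:ℝ)..r, (R τ y - R τ 0) :=
        intervalIntegral_intervalIntegral_swap ((diff_cont.continuousOn.integrableOn_compact
          (isCompact_uIcc.prod isCompact_uIcc)).mono_set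
            (prod_mono uIoc_subset_uIcc uIoc_subset_uIcc))
    _ = ∫ τ in t..t', (U τ r - U τ 0 - r * R τ 0) :=
        intervalIntegral.integral_congr fun τ hτ => by
          rw [uIcc_of_le htt'] at hτ
          rw [intervalIntegral.integral_sub ((S.continuous_grad_space τ).intervalIntegrable _ _)
            intervalIntegrable_const, S.integral_grad ⟨ht.1.trans hτ.1, hτ.2.trans ht'.2⟩
              ⟨hr.1, hr.2.trans (S.front_monotone hτ.1)⟩]
          simp

namespace IsSolOn

variable {p s₀ T : ℝ} {φ s : ℝ → ℝ} {u : ℝ → ℝ → ℝ}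

lemma initial_front_le (H : IsSolOn p s₀ φ T s u) {t : ℝ} (ht : t ∈ Icc 0 T) : s₀ ≤ s t :=
  H.init_s ▸ H.monotoneOn_front (left_mem_Icc.2 H.T_pos.le) ht ht.1

lemma zero_mem_Icc_front (H : IsSolOn p s₀ φ T s u) {t : ℝ} (ht : t ∈ Icc 0 T) :
    (0 : ℝ) ∈ Icc 0 (s t) :=
  left_mem_Icc.2 (H.s_pos t ht).le

lemma temp_zero_nonneg (H : IsSolOn p s₀ φ T s u) {t : ℝ} (ht : t ∈ Icc 0 T) : 0 ≤ u t 0 :=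
  H.u_nonneg t ht 0 (H.zero_mem_Icc_front ht)

lemma continuousOn_temp_time (H : IsSolOn p s₀ φ T s u) {a b x : ℝ} (ha : 0 ≤ a) (hb : b ≤ T)
    (hx : x ∈ Icc 0 (s a)) : ContinuousOn (fun t => u t x) (Icc a b) :=
  H.u_cont.comp (f := fun t : ℝ => (t, x)) (by fun_prop) fun t ht =>
    ⟨⟨ha.trans ht.1, ht.2.trans hb⟩, hx.1, hx.2.trans (H.monotoneOn_front
      ⟨ha, (ht.1.trans ht.2).trans hb⟩ ⟨ha.trans ht.1, ht.2.trans hb⟩ ht.1)⟩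

lemma integral_extGrad_sq {a b t L : ℝ} (ht : t ∈ Icc a b) (hs : 0 ≤ s t) (hL : s t ≤ L) :
    ∫ x in (0:ℝ)..L, extGrad (fun t => s (clamp a b t))
        (stripExtend s (fun t => deriv (u t)) a b) t x ^ 2 =
      ∫ x in (0:ℝ)..s t, deriv (u t) x ^ 2 := by
  rw [← integral_indicator_Ioc le_rfl hs hL, intervalIntegral.integral_of_le (hs.trans hL),
    intervalIntegral.integral_of_le (hs.trans hL)]
  refine setIntegral_congr_fun measurableSet_Ioc fun x hx => ?_
  by_cases hxs : x ≤ s t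
  · simp [extGrad, clamp_eq_self ht, hxs, hx.1, stripExtend_eq ht ⟨hx.1.le, hxs⟩]
  · simp [extGrad, clamp_eq_self ht, hxs]

lemma energy_le_of_test_function (H : IsSolOn p s₀ φ T s u) (hp : 1 ≤ p) {t₁ t₂ r : ℝ}
    (h₁ : 0 < t₁) (h₁₂ : t₁ ≤ t₂) (h₂ : t₂ < T) (hr : r ∈ Icc 0 (s t₁)) {θ : ℝ → ℝ}
    (hθ : Continuous θ) :
    energy p s u t₂ ≤ energy p s u t₁ - 2 * (∫ x in (0:ℝ)..r, θ x * (u t₂ x - u t₁ x)) +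
      (t₂ - t₁) * ∫ x in (0:ℝ)..r, θ x ^ 2 := by
  have h₁T : t₁ < T := h₁₂.trans_lt h₂
  have mem₁ : t₁ ∈ Icc 0 T := ⟨h₁.le, h₁T.le⟩
  have mem₂ : t₂ ∈ Icc 0 T := ⟨h₁.le.trans h₁₂, h₂.le⟩
  have memT : T ∈ Icc 0 T := right_mem_Icc.2 H.T_pos.le
  have strip₁ : t₁ ∈ Icc t₁ T := ⟨le_rfl, h₁T.le⟩
  have strip₂ : t₂ ∈ Icc t₁ T := ⟨h₁₂, h₂.le⟩
  have front₁ : s t₁ ≤ s T := H.monotoneOn_front mem₁ memT h₁T.le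
  have front₂ : s t₂ ≤ s T := H.monotoneOn_front mem₂ memT h₂.le
  have key := (H.stefanStrip h₁ h₁T).energy_inequality hp
    (fun t ht => H.stripExtend_deriv_zero h₁ ht) le_rfl h₁₂ h₂ (L := s T)
    (by rw [clamp_eq_self (right_mem_Icc.2 h₁T.le)]) ⟨hr.1, hr.2.trans front₁⟩ hθ
  have test_eq : ∫ x in (0:ℝ)..r, θ x * (stripExtend s u t₁ T t₂ x - stripExtend s u t₁ T t₁ x) =
      ∫ x in (0:ℝ)..r, θ x * (u t₂ x - u t₁ x) := intervalIntegral.integral_congr fun x hx => by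
    rw [uIcc_of_le hr.1] at hx
    rw [stripExtend_eq strip₁ ⟨hx.1, hx.2.trans hr.2⟩, stripExtend_eq strip₂
      ⟨hx.1, hx.2.trans (hr.2.trans (H.monotoneOn_front mem₁ mem₂ h₁₂))⟩]
  rwa [integral_extGrad_sq strip₁ (H.s_pos t₁ mem₁).le front₁,
    integral_extGrad_sq strip₂ (H.s_pos t₂ mem₂).le front₂, test_eq,
    stripExtend_eq strip₁ (H.zero_mem_Icc_front mem₁),
    stripExtend_eq strip₂ (H.zero_mem_Icc_front mem₂)] at key

lemma energy_antitone (H : IsSolOn p s₀ φ T s u) (hp : 1 ≤ p) {t₁ t₂ : ℝ} (h₁ : 0 < t₁)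
    (h₁₂ : t₁ ≤ t₂) (h₂ : t₂ < T) : energy p s u t₂ ≤ energy p s u t₁ := by
  simpa using H.energy_le_of_test_function hp h₁ h₁₂ h₂
    (H.zero_mem_Icc_front ⟨h₁.le, h₁₂.trans h₂.le⟩) (θ := fun _ => 0) continuous_const

lemma integral_sub_mul_temp_sub (H : IsSolOn p s₀ φ T s u) {t₁ t₂ r : ℝ} (h₁ : 0 < t₁)
    (h₁₂ : t₁ ≤ t₂) (h₂ : t₂ < T) (hr : r ∈ Icc 0 (s t₁)) :
    ∫ x in (0:ℝ)..r, (r - x) * (u t₂ x - u t₁ x) =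
      ∫ t in t₁..t₂, (u t r - u t 0 + r * u t 0 ^ p) := by
  have h₁T : t₁ < T := h₁₂.trans_lt h₂
  have front_le : ∀ t ∈ Icc t₁ t₂, s t₁ ≤ s t := fun t ht => H.monotoneOn_front ⟨h₁.le, h₁T.le⟩
    ⟨h₁.le.trans ht.1, ht.2.trans h₂.le⟩ ht.1
  have strip : ∀ t ∈ Icc t₁ t₂, t ∈ Icc t₁ T := fun t ht => ⟨ht.1, ht.2.trans h₂.le⟩
  refine Eq.trans (intervalIntegral.integral_congr fun x hx => ?_)
    (((H.stefanStrip h₁ h₁T).integral_sub_mul_temp_sub (strip t₁ (left_mem_Icc.2 h₁₂))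
      (strip t₂ (right_mem_Icc.2 h₁₂)) h₁₂ (r := r) (by rwa [clamp_eq_self ⟨le_rfl, h₁T.le⟩])).trans
      (intervalIntegral.integral_congr fun t ht => ?_))
  · rw [uIcc_of_le hr.1] at hx
    rw [stripExtend_eq (strip t₁ (left_mem_Icc.2 h₁₂)) ⟨hx.1, hx.2.trans hr.2⟩,
      stripExtend_eq (strip t₂ (right_mem_Icc.2 h₁₂))
        ⟨hx.1, hx.2.trans (hr.2.trans (front_le t₂ (right_mem_Icc.2 h₁₂)))⟩]
  · rw [uIcc_of_le h₁₂] at ht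
    have hrt := hr.2.trans (front_le t ht)
    rw [H.stripExtend_deriv_zero h₁ (strip t ht), stripExtend_eq (strip t ht) ⟨hr.1, hrt⟩,
      stripExtend_eq (strip t ht) ⟨le_rfl, hr.1.trans hrt⟩]
    ring

lemma energy_le_sub_of_le_moment (H : IsSolOn p s₀ φ T s u) (hp : 1 ≤ p) {t₁ t₂ r N : ℝ}
    (h₁ : 0 < t₁) (h₁₂ : t₁ ≤ t₂) (h₂ : t₂ < T) (hr₀ : 0 < r) (hr : r ≤ s t₁) (hN : 0 ≤ N)
    (hmoment : N * (t₂ - t₁) ≤ ∫ x in (0:ℝ)..r, (r - x) * (u t₂ x - u t₁ x)) :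
    energy p s u t₂ ≤ energy p s u t₁ - 3 * N ^ 2 / r ^ 3 * (t₂ - t₁) := by
  -- The multiple of `r - x` that makes the resulting bound optimal.
  set lam := 3 * N / r ^ 3 with hlam
  have key := H.energy_le_of_test_function hp h₁ h₁₂ h₂ ⟨hr₀.le, hr⟩
    (θ := fun x => lam * (r - x)) (by fun_prop)
  have weight_sq : ∫ x in (0:ℝ)..r, (lam * (r - x)) ^ 2 = lam ^ 2 * (r ^ 3 / 3) := by
    simp only [mul_pow, intervalIntegral.integral_const_mul]
    rw [intervalIntegral.integral_comp_sub_left (fun x : ℝ => x ^ 2), integral_pow]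
    norm_num
  have gain : lam * (N * (t₂ - t₁)) ≤
      ∫ x in (0:ℝ)..r, lam * (r - x) * (u t₂ x - u t₁ x) := by
    simp only [mul_assoc, intervalIntegral.integral_const_mul]
    exact mul_le_mul_of_nonneg_left hmoment (by positivity)
  have balance : (t₂ - t₁) * (lam ^ 2 * (r ^ 3 / 3)) - 2 * (lam * (N * (t₂ - t₁))) =
      -(3 * N ^ 2 / r ^ 3 * (t₂ - t₁)) := by
    rw [hlam]; field_simp; ring
  rw [weight_sq] at key
  linarith

lemma le_moment_of_le_temp_zero (H : IsSolOn p s₀ φ T s u) (hp : 1 ≤ p) {t₁ t₂ N : ℝ}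
    (h₁ : 0 < t₁) (h₁₂ : t₁ ≤ t₂) (h₂ : t₂ < T) (hN : 0 < N) (hs : 2 * N ^ (1 - p) ≤ s t₁)
    (hu : ∀ t ∈ Icc t₁ t₂, N ≤ u t 0) :
    N * (t₂ - t₁) ≤
      ∫ x in (0:ℝ)..2 * N ^ (1 - p), (2 * N ^ (1 - p) - x) * (u t₂ x - u t₁ x) := by
  have hr : 2 * N ^ (1 - p) ∈ Icc 0 (s t₁) := ⟨by positivity, hs⟩
  have hzero := H.zero_mem_Icc_front ⟨h₁.le, h₁₂.trans h₂.le⟩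
  have temp_zero_cont := H.continuousOn_temp_time h₁.le h₂.le hzero
  have integrand_cont : ContinuousOn
      (fun t => u t (2 * N ^ (1 - p)) - u t 0 + 2 * N ^ (1 - p) * u t 0 ^ p) (Icc t₁ t₂) :=
    ((H.continuousOn_temp_time h₁.le h₂.le hr).sub temp_zero_cont).add
      (continuousOn_const.mul (temp_zero_cont.rpow_const fun _ _ => .inr (by linarith)))
  have pointwise : ∀ t ∈ Icc t₁ t₂,
      N ≤ u t (2 * N ^ (1 - p)) - u t 0 + 2 * N ^ (1 - p) * u t 0 ^ p := by
    intro t ht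
    have htT : t ∈ Icc 0 T := ⟨h₁.le.trans ht.1, ht.2.trans h₂.le⟩
    have temp_nonneg : 0 ≤ u t (2 * N ^ (1 - p)) := H.u_nonneg t htT _ ⟨hr.1,
      hs.trans (H.monotoneOn_front ⟨h₁.le, h₁₂.trans h₂.le⟩ htT ht.1)⟩
    have power_le : u t 0 ≤ N ^ (1 - p) * u t 0 ^ p := by
      have hv : 0 < u t 0 := hN.trans_le (hu t ht)
      calc u t 0 = u t 0 ^ (1 - p) * u t 0 ^ p := by
            rw [← Real.rpow_add hv, sub_add_cancel, Real.rpow_one]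
        _ ≤ N ^ (1 - p) * u t 0 ^ p := by
            gcongr ?_ * _
            exact Real.rpow_le_rpow_of_nonpos hN (hu t ht) (by linarith)
    linarith [hu t ht]
  rw [H.integral_sub_mul_temp_sub h₁ h₁₂ h₂ hr]
  simpa [mul_comm] using intervalIntegral.integral_mono_on (μ := volume) h₁₂
    intervalIntegrable_const (integrand_cont.intervalIntegrable_of_Icc h₁₂) pointwise

lemma energy_le_sub_of_le_temp_zero (H : IsSolOn p s₀ φ T s u) (hp : 1 ≤ p) {t₁ t₂ N : ℝ}
    (h₁ : 0 < t₁) (h₁₂ : t₁ ≤ t₂) (h₂ : t₂ < T) (hN : 0 < N) (hs : 2 * N ^ (1 - p) ≤ s₀)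
    (hu : ∀ t ∈ Icc t₁ t₂, N ≤ u t 0) :
    energy p s u t₂ ≤ energy p s u t₁ - 3 / 8 * N ^ (3 * p - 1) * (t₂ - t₁) := by
  have hst : 2 * N ^ (1 - p) ≤ s t₁ := hs.trans (H.initial_front_le ⟨h₁.le, h₁₂.trans h₂.le⟩)
  have rate : 3 * N ^ 2 / (2 * N ^ (1 - p)) ^ 3 = 3 / 8 * N ^ (3 * p - 1) := by
    have cube : (N ^ (1 - p)) ^ 3 * N ^ (3 * p - 1) = N ^ 2 := by
      rw [← Real.rpow_mul_natCast hN.le, ← Real.rpow_add hN, ← Real.rpow_natCast]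
      congr 1
      push_cast
      ring
    rw [div_eq_iff (by positivity), ← cube]
    ring
  rw [← rate]
  exact H.energy_le_sub_of_le_moment hp h₁ h₁₂ h₂ (by positivity) hst hN.le
    (H.le_moment_of_le_temp_zero hp h₁ h₁₂ h₂ hN hst hu)

lemma neg_energy_le_temp_zero_rpow (H : IsSolOn p s₀ φ T s u) (hp : 0 ≤ p) {t : ℝ}
    (ht : t ∈ Icc 0 T) : -energy p s u t ≤ u t 0 ^ (p + 1) := by
  have dirichlet_nonneg : 0 ≤ ∫ x in (0:ℝ)..s t, deriv (u t) x ^ 2 :=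
    intervalIntegral.integral_nonneg (H.s_pos t ht).le fun x _ => sq_nonneg _
  have := div_le_self (Real.rpow_nonneg (H.temp_zero_nonneg ht) (p + 1)) (by linarith : 1 ≤ p + 1)
  unfold energy
  linarith

end IsSolOn

/-! ### Bounds for short times -/

section Analysis

lemma integral_le_mul_of_eq_zero_of_le {f : ℝ → ℝ} {c L B : ℝ} (hf : Continuous f) (hc : 0 ≤ c)
    (hcL : c ≤ L) (hzero : ∀ x, c ≤ x → f x = 0) (hB : ∀ x ∈ Icc 0 c, f x ≤ B) :
    ∫ x in (0:ℝ)..L, f x ≤ B * c := by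
  have tail : ∫ x in c..L, f x = 0 := by
    rw [intervalIntegral.integral_congr (g := fun _ => 0) fun x hx =>
      hzero x (uIcc_of_le hcL ▸ hx).1, intervalIntegral.integral_zero]
  rw [← intervalIntegral.integral_add_adjacent_intervals (hf.intervalIntegrable 0 c)
    (hf.intervalIntegrable c L), tail, add_zero]
  simpa [mul_comm] using intervalIntegral.integral_mono_on (μ := volume) hc
    (hf.intervalIntegrable _ _) intervalIntegrable_const hB

lemma exists_eq_and_forall_Icc_left_le {f : ℝ → ℝ} {a b d : ℝ} (hab : a ≤ b)
    (hf : ContinuousOn f (Icc a b)) (ha : f a ≤ d) (hb : d ≤ f b) :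
    ∃ t ∈ Icc a b, f t = d ∧ ∀ x ∈ Icc a t, f x ≤ d := by
  have hits_compact : IsCompact (Icc a b ∩ f ⁻¹' {d}) := isCompact_Icc.of_isClosed_subset
    (hf.preimage_isClosed_of_isClosed isClosed_Icc isClosed_singleton) inter_subset_left
  obtain ⟨t, ⟨ht, hft⟩, first⟩ :=
    hits_compact.exists_isLeast (intermediate_value_Icc hab hf ⟨ha, hb⟩)
  refine ⟨t, ht, hft, fun x hx => le_of_not_gt fun hlt => ?_⟩
  obtain ⟨y, hy, hfy⟩ := intermediate_value_Icc hx.1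
    (hf.mono (Icc_subset_Icc_right (hx.2.trans ht.2))) ⟨ha, hlt.le⟩
  have hty : t ≤ y := first ⟨⟨hy.1, hy.2.trans (hx.2.trans ht.2)⟩, hfy⟩
  rw [le_antisymm hx.2 (hty.trans hy.2), hft] at hlt
  exact lt_irrefl _ hlt

end Analysis

namespace StefanStrip

variable {a b : ℝ} {σ : ℝ → ℝ} {U R : ℝ → ℝ → ℝ}

lemma integral_temp_add_front (S : StefanStrip a b σ U R) {t t' x : ℝ} (ht : t ∈ Icc a b)
    (ht' : t' ∈ Icc a b) (htt' : t ≤ t') (hx : σ t' < x) :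
    (∫ z in (0:ℝ)..x, U t' z) + σ t' = (∫ z in (0:ℝ)..x, U t z) + σ t - ∫ τ in t..t', R τ 0 := by
  have no_flux : ∫ τ in t..t', extGrad σ R τ x = 0 := by
    rw [intervalIntegral.integral_congr (g := fun _ => (0 : ℝ)) fun τ hτ => ?_,
      intervalIntegral.integral_zero]
    exact if_neg (not_le.2 ((S.front_monotone (uIcc_of_le htt' ▸ hτ).2).trans_lt hx))
  have balance := S.integral_extGrad ht ht' htt' ((S.front_pos t').trans hx).le
  rw [no_flux, fluxIntegral, min_eq_right hx.le,
    min_eq_right ((S.front_monotone htt').trans hx.le), intervalIntegral.integral_sub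
      (S.temp_intervalIntegrable ..) (S.temp_intervalIntegrable ..)] at balance
  linarith

lemma front_le_of_temp_le (S : StefanStrip a b σ U R) {t t' A B : ℝ} (ht : t ∈ Icc a b)
    (ht' : t' ∈ Icc a b) (htt' : t ≤ t') (hA : ∀ x ∈ Icc 0 (σ t), U t x ≤ A)
    (hB : ∀ τ ∈ Icc t t', -R τ 0 ≤ B) : σ t' ≤ (1 + A) * σ t + B * (t' - t) := by
  have balance := S.integral_temp_add_front ht ht' htt' (lt_add_one (σ t'))
  have mass_nonneg : 0 ≤ ∫ z in (0:ℝ)..σ t' + 1, U t' z := intervalIntegral.integral_nonneg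
    (by linarith [S.front_pos t']) fun x _ => S.temp_nonneg t' x
  have mass_le : ∫ z in (0:ℝ)..σ t' + 1, U t z ≤ A * σ t :=
    integral_le_mul_of_eq_zero_of_le (S.continuous_temp_space t) (S.front_pos t).le
      (by linarith [S.front_monotone htt']) (S.temp_eq_zero t) hA
  have inflow_le : ∫ τ in t..t', -R τ 0 ≤ B * (t' - t) := by
    simpa [mul_comm] using intervalIntegral.integral_mono_on (μ := volume) htt'
      ((S.continuous_grad_time 0).neg.intervalIntegrable _ _) intervalIntegrable_const hB
  rw [intervalIntegral.integral_neg] at inflow_le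
  linarith

lemma integral_temp_sq_le_add (S : StefanStrip a b σ U R) {t₁ t₂ L κ : ℝ} (ha : a ≤ t₁)
    (h₁₂ : t₁ ≤ t₂) (hb : t₂ ≤ b) (hL : σ b ≤ L) (hκ : ∀ t ∈ Ico t₁ t₂,
      -2 * R t 0 * U t 0 - 2 * (∫ x in (0:ℝ)..L, extGrad σ R t x ^ 2) ≤ κ) :
    ∫ x in (0:ℝ)..L, U t₂ x ^ 2 ≤ (∫ x in (0:ℝ)..L, U t₁ x ^ 2) + κ * (t₂ - t₁) := by
  have sq_cont : Continuous fun t => ∫ x in (0:ℝ)..L, U t x ^ 2 :=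
    intervalIntegral.continuous_parametric_intervalIntegral_of_continuous'
      (S.temp_continuous.pow 2) 0 L
  refine image_le_of_liminf_slope_right_le_deriv_boundary sq_cont.continuousOn
    (B := fun t => (∫ x in (0:ℝ)..L, U t₁ x ^ 2) + κ * (t - t₁)) (B' := fun _ => κ) (by simp)
    (by fun_prop) (fun t _ => ?_) (fun t ht κ' hκ' => ?_) (right_mem_Icc.2 h₁₂)
  · simpa using (((hasDerivAt_id t).sub_const t₁).const_mul κ).const_add
      (∫ x in (0:ℝ)..L, U t₁ x ^ 2) |>.hasDerivWithinAt
  · exact (S.eventually_slope_integral_temp_sq_lt ⟨ha.trans ht.1, ht.2.trans_le hb⟩ hL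
      ((hκ t ht).trans_lt hκ')).frequently

end StefanStrip

namespace IsSolOn

variable {p s₀ T A M : ℝ} {φ s : ℝ → ℝ} {u : ℝ → ℝ → ℝ}

lemma front_le_of_temp_le (H : IsSolOn p s₀ φ T s u) (hp : 0 ≤ p)
    (hA : ∀ t ∈ Icc 0 T, ∀ x ∈ Icc 0 (s t), u t x ≤ A) : s T ≤ (1 + A) * s₀ + A ^ p * T := by
  have from_positive_time : ∀ a ∈ Ioo 0 T, s T ≤ (1 + A) * s a + A ^ p * (T - a) := by
    intro a ha
    have memT : ∀ t ∈ Icc a T, t ∈ Icc 0 T := fun t ht => ⟨ha.1.le.trans ht.1, ht.2⟩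
    have haT : a ∈ Icc a T := left_mem_Icc.2 ha.2.le
    have hTT : T ∈ Icc a T := right_mem_Icc.2 ha.2.le
    have bound := (H.stefanStrip ha.1 ha.2).front_le_of_temp_le (A := A) (B := A ^ p) haT hTT
      ha.2.le (fun x hx => ?_) (fun t ht => ?_)
    · rwa [clamp_eq_self haT, clamp_eq_self hTT] at bound
    · rw [clamp_eq_self haT] at hx
      rw [stripExtend_eq haT hx]
      exact hA a (memT a haT) x hx
    · rw [H.stripExtend_deriv_zero ha.1 ht, stripExtend_eq ht (H.zero_mem_Icc_front (memT t ht)),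
        neg_neg]
      exact Real.rpow_le_rpow (H.temp_zero_nonneg (memT t ht))
        (hA t (memT t ht) 0 (H.zero_mem_Icc_front (memT t ht))) hp
  have front_lim : Tendsto s (𝓝[>] 0) (𝓝 s₀) := by
    rw [← nhdsWithin_Ioo_eq_nhdsGT H.T_pos, ← H.init_s]
    exact ((H.s_cont 0 (left_mem_Icc.2 H.T_pos.le)).mono Ioo_subset_Icc_self).tendsto
  have time_lim : Tendsto (fun a : ℝ => T - a) (𝓝[>] 0) (𝓝 T) :=
    (Continuous.tendsto' (by fun_prop) 0 T (by simp)).mono_left nhdsWithin_le_nhds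
  exact ge_of_tendsto ((front_lim.const_mul _).add (time_lim.const_mul _))
    (by filter_upwards [Ioo_mem_nhdsGT H.T_pos] using from_positive_time)

lemma two_mul_temp_flux_sub_dirichlet_le (H : IsSolOn p s₀ φ T s u) (hp : 0 ≤ p) {t : ℝ}
    (ht : t ∈ Icc 0 T) (hA : u t 0 ≤ A) :
    2 * (u t 0 ^ p * u t 0) - 2 * (∫ x in (0:ℝ)..s t, deriv (u t) x ^ 2) ≤
      2 * A ^ (p + 1) - 4 * energy p s u t := by
  have hu := H.temp_zero_nonneg ht
  have power_le : u t 0 ^ (p + 1) ≤ A ^ (p + 1) := Real.rpow_le_rpow hu hA (by linarith)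
  have : 0 ≤ u t 0 ^ (p + 1) / (p + 1) := by positivity
  rw [← Real.rpow_add_one' hu (by linarith), energy]
  linarith

lemma energy_mul_le_of_temp_le (H : IsSolOn p s₀ φ T s u) (hp : 1 ≤ p) {t₁ t₂ : ℝ} (h₁ : 0 < t₁)
    (h₁₂ : t₁ ≤ t₂) (h₂ : t₂ < T) (hA : ∀ x ∈ Icc 0 (s t₁), u t₁ x ≤ A)
    (hA₀ : ∀ t ∈ Icc t₁ t₂, u t 0 ≤ A) :
    (4 * energy p s u t₂ - 2 * A ^ (p + 1)) * (t₂ - t₁) ≤ A ^ 2 * s t₁ := by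
  have h₁T : t₁ < T := h₁₂.trans_lt h₂
  have S := H.stefanStrip h₁ h₁T
  have memT : ∀ t ∈ Icc t₁ T, t ∈ Icc 0 T := fun t ht => ⟨h₁.le.trans ht.1, ht.2⟩
  have strip₁ : t₁ ∈ Icc t₁ T := left_mem_Icc.2 h₁T.le
  have stripT : T ∈ Icc t₁ T := right_mem_Icc.2 h₁T.le
  have front_le : ∀ t ∈ Icc t₁ T, s t ≤ s T := fun t ht =>
    H.monotoneOn_front (memT t ht) (memT T stripT) ht.2
  have dissipation : ∀ t ∈ Ico t₁ t₂, -2 * stripExtend s (fun t => deriv (u t)) t₁ T t 0 *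
        stripExtend s u t₁ T t 0 - 2 * (∫ x in (0:ℝ)..s T, extGrad (fun t => s (clamp t₁ T t))
          (stripExtend s (fun t => deriv (u t)) t₁ T) t x ^ 2) ≤
      2 * A ^ (p + 1) - 4 * energy p s u t₂ := by
    intro t ht
    have htT : t ∈ Icc t₁ T := ⟨ht.1, (ht.2.trans h₂).le⟩
    have := H.two_mul_temp_flux_sub_dirichlet_le (zero_le_one.trans hp) (memT t htT)
      (hA₀ t ⟨ht.1, ht.2.le⟩)
    have := H.energy_antitone hp (h₁.trans_le ht.1) ht.2.le h₂
    rw [integral_extGrad_sq htT (H.s_pos t (memT t htT)).le (front_le t htT),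
      H.stripExtend_deriv_zero h₁ htT, stripExtend_eq htT (H.zero_mem_Icc_front (memT t htT))]
    linarith
  have decay := S.integral_temp_sq_le_add le_rfl h₁₂ h₂.le (by rw [clamp_eq_self stripT])
    dissipation
  have initial_sq : ∫ x in (0:ℝ)..s T, stripExtend s u t₁ T t₁ x ^ 2 ≤ A ^ 2 * s t₁ := by
    refine integral_le_mul_of_eq_zero_of_le ((S.continuous_temp_space t₁).pow 2)
      (H.s_pos t₁ (memT t₁ strip₁)).le (front_le t₁ strip₁) (fun x hx => ?_) (fun x hx => ?_)
    · rw [S.temp_eq_zero t₁ x (by rwa [clamp_eq_self strip₁]), zero_pow two_ne_zero]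
    · rw [stripExtend_eq strip₁ hx]
      exact pow_le_pow_left₀ (H.u_nonneg t₁ (memT t₁ strip₁) x hx) (hA x hx) 2
  have final_sq : 0 ≤ ∫ x in (0:ℝ)..s T, stripExtend s u t₁ T t₂ x ^ 2 :=
    intervalIntegral.integral_nonneg (H.s_pos T (memT T stripT)).le fun x _ => sq_nonneg _
  linarith

lemma temp_zero_le_of_temp_zero_le_two_mul (H : IsSolOn p s₀ φ T s u) (hp : 0 ≤ p) (hM : 0 < M)
    {K : ℝ} (hK : (2 * M) ^ p < K) (hT : 16 * K ^ 2 * T ≤ M ^ 2)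
    (hφ : ∀ x ∈ Icc 0 s₀, φ x ≤ M) (hu : ∀ t ∈ Icc 0 T, u t 0 ≤ 2 * M) :
    u T 0 ≤ 3 / 2 * M := by
  have complete_sq : ∀ x, M + M / 4 + -K * x + K ^ 2 / M * x ^ 2 = M + (K * x - M / 2) ^ 2 / M := by
    intro x
    field_simp
    ring
  have sq_nonneg : ∀ x, 0 ≤ (K * x - M / 2) ^ 2 / M := fun x => by positivity
  have hTmem : T ∈ Icc 0 T := right_mem_Icc.2 H.T_pos.le
  have hK₀ : 0 < K := lt_of_le_of_lt (by positivity) hK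
  have barrier := H.temp_le_quadratic (A := M + M / 4) (b := -K) (c := K ^ 2 / M)
    (d := 4 * (K ^ 2 / M)) (by linarith [show 0 < K ^ 2 / M by positivity])
    (fun x hx => by rw [complete_sq]; linarith [hφ x hx, sq_nonneg x])
    (fun t ht => by
      have := ht.1
      have := sq_nonneg (s t)
      rw [complete_sq]
      positivity)
    (fun t ht => .inl (by
      have htT := Ioc_subset_Icc_self ht
      have := Real.rpow_le_rpow (H.temp_zero_nonneg htT) (hu t htT) hp
      linarith [H.bc_zero t ht])) T hTmem 0 (H.zero_mem_Icc_front hTmem)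
  have drift_le : 4 * (K ^ 2 / M) * T ≤ M / 4 := by
    rw [show 4 * (K ^ 2 / M) * T = 16 * K ^ 2 * T / (4 * M) by field_simp; ring,
      div_le_iff₀ (by positivity)]
    linarith
  norm_num at barrier
  linarith

end IsSolOn

namespace IsGlobalSol

variable {p s₀ M : ℝ} {φ s : ℝ → ℝ} {u : ℝ → ℝ → ℝ}

lemma isSolOn_add_one (H : IsGlobalSol p s₀ φ s u) {t : ℝ} (ht : 0 ≤ t) :
    IsSolOn p s₀ φ (t + 1) s u :=
  H (t + 1) (by linarith)

lemma continuousOn_temp_zero (H : IsGlobalSol p s₀ φ s u) {a b : ℝ} (ha : 0 ≤ a) (hab : a ≤ b) :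
    ContinuousOn (fun t => u t 0) (Icc a b) :=
  (H.isSolOn_add_one (ha.trans hab)).continuousOn_temp_time ha (by linarith)
    ((H.isSolOn_add_one (ha.trans hab)).zero_mem_Icc_front ⟨ha, by linarith⟩)

lemma temp_zero_le_two_mul (H : IsGlobalSol p s₀ φ s u) (hp : 0 ≤ p) (hM : 0 < M) {K : ℝ}
    (hK : (2 * M) ^ p < K) (hφ : ∀ x ∈ Icc 0 s₀, φ x ≤ M) {t : ℝ} (ht : 0 ≤ t)
    (htK : 16 * K ^ 2 * t ≤ M ^ 2) : u t 0 ≤ 2 * M := by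
  by_contra! hlt
  have init_le : u 0 0 ≤ M := by
    have H₁ := H 1 one_pos
    have hs₀ : (0 : ℝ) ∈ Icc 0 s₀ := H₁.init_s ▸ H₁.zero_mem_Icc_front (by simp)
    rw [H₁.init 0 hs₀]
    exact hφ 0 hs₀
  obtain ⟨T, hT, hTu, before⟩ := exists_eq_and_forall_Icc_left_le (d := 2 * M) ht
    (H.continuousOn_temp_zero le_rfl ht) (by linarith) hlt.le
  have T_pos : 0 < T := hT.1.lt_of_ne fun h => by subst h; linarith
  have := (H T T_pos).temp_zero_le_of_temp_zero_le_two_mul hp hM hK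
    ((mul_le_mul_of_nonneg_left hT.2 (by positivity)).trans htK) hφ before
  linarith

lemma energy_le_of_short_time (H : IsGlobalSol p s₀ φ s u) (hp : 1 ≤ p) (hM : 0 < M) {K τ : ℝ}
    (hK : (2 * M) ^ p < K) (hτ : 0 < τ) (hτK : 16 * K ^ 2 * τ ≤ M ^ 2) (hs : s₀ ≤ M)
    (hφ : ∀ x ∈ Icc 0 s₀, φ x ≤ M) :
    energy p s u τ ≤ (2 * M) ^ (p + 1) / 2 +
      (2 * M) ^ 2 * ((1 + 2 * M) * M + (2 * M) ^ p * τ) / (2 * τ) := by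
  have hp₀ : 0 ≤ p := zero_le_one.trans hp
  have zero_le : ∀ t ∈ Icc 0 τ, u t 0 ≤ 2 * M := fun t ht =>
    H.temp_zero_le_two_mul hp₀ hM hK hφ ht.1
      ((mul_le_mul_of_nonneg_left ht.2 (by positivity)).trans hτK)
  have temp_le := (H τ hτ).temp_le_of_temp_zero_le (by positivity)
    (fun x hx => (hφ x hx).trans (by linarith)) fun t ht => zero_le t (Ioc_subset_Icc_self ht)
  have half_mem : τ / 2 ∈ Icc 0 τ := ⟨by linarith, by linarith⟩
  have front_le : s (τ / 2) ≤ (1 + 2 * M) * M + (2 * M) ^ p * τ :=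
    calc s (τ / 2) ≤ s τ :=
          (H τ hτ).monotoneOn_front half_mem (right_mem_Icc.2 hτ.le) half_mem.2
      _ ≤ (1 + 2 * M) * s₀ + (2 * M) ^ p * τ := (H τ hτ).front_le_of_temp_le hp₀ temp_le
      _ ≤ (1 + 2 * M) * M + (2 * M) ^ p * τ := by gcongr
  have := (H.isSolOn_add_one hτ.le).energy_mul_le_of_temp_le hp (half_pos hτ) half_mem.2
    (by linarith) (temp_le _ half_mem) fun t ht => zero_le t ⟨half_mem.1.trans ht.1, ht.2⟩
  have : (2 * M) ^ 2 * s (τ / 2) ≤ (2 * M) ^ 2 * ((1 + 2 * M) * M + (2 * M) ^ p * τ) := by gcongr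
  rw [← sub_le_iff_le_add', le_div_iff₀ (by positivity)]
  linarith

lemma exists_energy_le (hp : 1 ≤ p) (hM : 0 < M) :
    ∃ τ > 0, ∃ E > 0, ∀ (s₀ : ℝ) (φ s : ℝ → ℝ) (u : ℝ → ℝ → ℝ), IsGlobalSol p s₀ φ s u →
      s₀ ≤ M → (∀ x ∈ Icc 0 s₀, φ x ≤ M) →
        (∀ t ∈ Icc 0 τ, u t 0 ≤ 2 * M) ∧ energy p s u τ ≤ E := by
  set K := (2 * M) ^ p + 1
  have hK : (2 * M) ^ p < K := lt_add_one _
  have : 0 < K := by positivity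
  have hτ : 16 * K ^ 2 * (M ^ 2 / (16 * K ^ 2)) = M ^ 2 := mul_div_cancel₀ _ (by positivity)
  refine ⟨M ^ 2 / (16 * K ^ 2), by positivity, _, ?_, fun s₀ φ s u H hs hφ => ⟨fun t ht => ?_,
    H.energy_le_of_short_time hp hM hK (by positivity) hτ.le hs hφ⟩⟩
  · positivity
  · exact H.temp_zero_le_two_mul (zero_le_one.trans hp) hM hK hφ ht.1
      ((mul_le_mul_of_nonneg_left ht.2 (by positivity)).trans hτ.le)

end IsGlobalSol

/-! ### Lower bound for the energy -/

section Superlinear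

variable {f : ℝ → ℝ} {t₀ c q : ℝ}

lemma two_mul_le_of_superlinear_growth (hc : 0 < c) (hq : 0 ≤ q)
    (growth : ∀ t t', t₀ ≤ t → t ≤ t' → f t + c * f t ^ q * (t' - t) ≤ f t') {t Z : ℝ}
    (ht : t₀ ≤ t) (hZ : 0 < Z) (hZt : Z ≤ f t) : 2 * Z ≤ f (t + c⁻¹ * Z ^ (1 - q)) := by
  have step : c * Z ^ q * (c⁻¹ * Z ^ (1 - q)) = Z := by
    rw [mul_mul_mul_comm, mul_inv_cancel₀ hc.ne', one_mul, ← Real.rpow_add hZ, add_sub_cancel,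
      Real.rpow_one]
  have power_le : Z ^ q ≤ f t ^ q := Real.rpow_le_rpow hZ.le hZt hq
  have waiting_pos : 0 < c⁻¹ * Z ^ (1 - q) := by positivity
  calc 2 * Z = Z + c * Z ^ q * (c⁻¹ * Z ^ (1 - q)) := by rw [step]; ring
    _ ≤ f t + c * f t ^ q * (c⁻¹ * Z ^ (1 - q)) := by gcongr
    _ ≤ f (t + c⁻¹ * Z ^ (1 - q)) := by
        simpa using growth t (t + c⁻¹ * Z ^ (1 - q)) ht (by linarith)

lemma two_pow_mul_le_of_superlinear_growth (hc : 0 < c) (hq : 0 ≤ q)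
    (growth : ∀ t t', t₀ ≤ t → t ≤ t' → f t + c * f t ^ q * (t' - t) ≤ f t') {Z : ℝ}
    (hZ : 0 < Z) (hZt : Z ≤ f t₀) (k : ℕ) :
    2 ^ k * Z ≤ f (t₀ + c⁻¹ * Z ^ (1 - q) * ∑ i ∈ Finset.range k, ((2 : ℝ) ^ (1 - q)) ^ i) := by
  induction k with
  | zero => simpa
  | succ k ih =>
    have doubled := two_mul_le_of_superlinear_growth hc hq growth
      (le_add_of_nonneg_right (by positivity)) (by positivity) ih
    have waiting_eq : (2 ^ k * Z) ^ (1 - q) = Z ^ (1 - q) * ((2 : ℝ) ^ (1 - q)) ^ k := by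
      rw [Real.mul_rpow (by positivity) hZ.le, Real.rpow_pow_comm zero_le_two, mul_comm]
    rw [waiting_eq, ← mul_assoc c⁻¹, add_assoc, ← mul_add, ← Finset.sum_range_succ] at doubled
    rwa [pow_succ', mul_assoc]

-- The successive doubling times form a convergent geometric series.
lemma nonpos_of_superlinear_growth (hc : 0 < c) (hq : 1 < q)
    (growth : ∀ t t', t₀ ≤ t → t ≤ t' → f t + c * f t ^ q * (t' - t) ≤ f t') : f t₀ ≤ 0 := by
  by_contra! hpos
  have ratio_lt_one : (2 : ℝ) ^ (1 - q) < 1 :=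
    Real.rpow_lt_one_of_one_lt_of_neg one_lt_two (by linarith)
  set ρ := (2 : ℝ) ^ (1 - q)
  have ρ_nonneg : 0 ≤ ρ := by positivity
  set blowUpTime := t₀ + c⁻¹ * f t₀ ^ (1 - q) * (1 - ρ)⁻¹ with hblowUpTime
  have bound : ∀ k : ℕ, 2 ^ k * f t₀ ≤ f blowUpTime := by
    intro k
    have doubled := two_pow_mul_le_of_superlinear_growth hc (by linarith) growth hpos le_rfl k
    have sum_le : ∑ i ∈ Finset.range k, ρ ^ i ≤ (1 - ρ)⁻¹ := by
      rw [← tsum_geometric_of_lt_one ρ_nonneg ratio_lt_one]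
      exact (summable_geometric_of_lt_one ρ_nonneg ratio_lt_one).sum_le_tsum _
        fun i _ => by positivity
    set t := t₀ + c⁻¹ * f t₀ ^ (1 - q) * ∑ i ∈ Finset.range k, ρ ^ i with ht
    have t_le : t ≤ blowUpTime := by rw [ht, hblowUpTime]; gcongr
    have : 0 ≤ c * f t ^ q * (blowUpTime - t) :=
      mul_nonneg (mul_nonneg hc.le (Real.rpow_nonneg
        ((mul_nonneg (by positivity) hpos.le).trans doubled) q)) (sub_nonneg.2 t_le)
    linarith [growth t blowUpTime (by rw [ht]; exact le_add_of_nonneg_right (by positivity)) t_le]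
  obtain ⟨k, hk⟩ := pow_unbounded_of_one_lt (f blowUpTime / f t₀) (one_lt_two (α := ℝ))
  rw [div_lt_iff₀ hpos] at hk
  exact (bound k).not_gt hk

end Superlinear

namespace IsGlobalSol

variable {p s₀ : ℝ} {φ s : ℝ → ℝ} {u : ℝ → ℝ → ℝ}

lemma energy_antitoneOn (H : IsGlobalSol p s₀ φ s u) (hp : 1 ≤ p) :
    AntitoneOn (energy p s u) (Ioi 0) := fun _ h₁ _ h₂ h₁₂ =>
  (H.isSolOn_add_one (mem_Ioi.1 h₂).le).energy_antitone hp h₁ h₁₂ (lt_add_one _)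

lemma neg_energy_growth (H : IsGlobalSol p s₀ φ s u) (hp : 1 < p) {N₀ t t' : ℝ} (hN₀ : 0 < N₀)
    (hs : 2 * N₀ ^ (1 - p) ≤ s₀) (ht : 0 < t) (htt' : t ≤ t')
    (hE : N₀ ^ (p + 1) ≤ -energy p s u t) :
    -energy p s u t + 3 / 8 * (-energy p s u t) ^ ((3 * p - 1) / (p + 1)) * (t' - t) ≤
      -energy p s u t' := by
  have hZ : 0 < -energy p s u t := lt_of_lt_of_le (by positivity) hE
  obtain ⟨N, hN, hNZ⟩ : ∃ N > 0, N ^ (p + 1) = -energy p s u t :=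
    ⟨(-energy p s u t) ^ (p + 1)⁻¹, by positivity, Real.rpow_inv_rpow hZ.le (by linarith)⟩
  have N₀_le : N₀ ≤ N := (Real.rpow_le_rpow_iff hN₀.le hN.le (by linarith)).1 (hNZ ▸ hE)
  have power_le : N ^ (1 - p) ≤ N₀ ^ (1 - p) :=
    Real.rpow_le_rpow_of_nonpos hN₀ N₀_le (by linarith)
  have temp_large : ∀ τ ∈ Icc t t', N ≤ u τ 0 := by
    intro τ hτ
    have hτ₀ : 0 < τ := ht.trans_le hτ.1
    have hτT : τ ∈ Icc 0 (τ + 1) := ⟨hτ₀.le, by linarith⟩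
    have Hτ := H.isSolOn_add_one hτ₀.le
    refine (Real.rpow_le_rpow_iff hN.le (Hτ.temp_zero_nonneg hτT) (by linarith : 0 < p + 1)).1 ?_
    linarith [H.energy_antitoneOn hp.le ht hτ₀ hτ.1,
      Hτ.neg_energy_le_temp_zero_rpow (by linarith) hτT]
  have drop := (H.isSolOn_add_one (ht.le.trans htt')).energy_le_sub_of_le_temp_zero hp.le ht htt'
    (lt_add_one t') hN (by linarith) temp_large
  have exponent : N ^ (3 * p - 1) = (-energy p s u t) ^ ((3 * p - 1) / (p + 1)) := by
    rw [← hNZ, ← Real.rpow_mul hN.le, mul_div_cancel₀ _ (by linarith)]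
  rw [exponent] at drop
  linarith

lemma neg_rpow_lt_energy (H : IsGlobalSol p s₀ φ s u) (hp : 1 < p) {N₀ t : ℝ} (hN₀ : 0 < N₀)
    (hs : 2 * N₀ ^ (1 - p) ≤ s₀) (ht : 0 < t) : -N₀ ^ (p + 1) < energy p s u t := by
  by_contra! hE
  have energy_le : ∀ t', t ≤ t' → energy p s u t' ≤ -N₀ ^ (p + 1) := fun t' htt' =>
    (H.energy_antitoneOn hp.le ht (ht.trans_le htt') htt').trans hE
  have := nonpos_of_superlinear_growth (f := fun t => -energy p s u t) (t₀ := t)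
    (by norm_num : (0 : ℝ) < 3 / 8) ((one_lt_div (by linarith)).2 (by linarith))
    fun t₁ t₂ h₁ h₁₂ => H.neg_energy_growth hp hN₀ hs (ht.trans_le h₁) h₁₂
      (by linarith [energy_le t₁ h₁])
  have : 0 < N₀ ^ (p + 1) := by positivity
  linarith

end IsGlobalSol

/-! ### The bound at the fixed boundary -/

section Analysis

lemma exists_eq_and_forall_Icc_right_ge {f : ℝ → ℝ} {a b c : ℝ} (hab : a ≤ b)
    (hf : ContinuousOn f (Icc a b)) (ha : f a ≤ c) (hb : c ≤ f b) :
    ∃ t ∈ Icc a b, f t = c ∧ ∀ x ∈ Icc t b, c ≤ f x := by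
  have reflected_cont : ContinuousOn (fun x => -f (-x)) (Icc (-b) (-a)) :=
    (hf.comp continuousOn_neg fun x hx => ⟨le_neg_of_le_neg hx.2, neg_le_of_neg_le hx.1⟩).neg
  obtain ⟨t, ht, htc, after⟩ := exists_eq_and_forall_Icc_left_le (d := -c) (neg_le_neg hab)
    reflected_cont (by simpa) (by simpa)
  refine ⟨-t, ⟨le_neg_of_le_neg ht.2, neg_le_of_neg_le ht.1⟩, neg_inj.1 htc, fun x hx => ?_⟩
  simpa using after (-x) ⟨neg_le_neg hx.2, neg_le_of_neg_le hx.1⟩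

lemma abs_integral_le_of_integral_sq {g : ℝ → ℝ} {L x e : ℝ} (hg : ContinuousOn g (Icc 0 L))
    (hx : x ∈ Icc 0 L) (he : 0 < e) :
    |∫ z in (0:ℝ)..x, g z| ≤ (e * (∫ z in (0:ℝ)..L, g z ^ 2) + x / e) / 2 := by
  have hgx : ContinuousOn g (Icc 0 x) := hg.mono (Icc_subset_Icc_right hx.2)
  have sq_integrable : IntervalIntegrable (fun z => g z ^ 2) volume 0 x :=
    (hgx.pow 2).intervalIntegrable_of_Icc hx.1
  have young : ∀ z, |g z| ≤ e / 2 * g z ^ 2 + 1 / (2 * e) := by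
    intro z
    have : e / 2 * g z ^ 2 + 1 / (2 * e) - |g z| = (e * |g z| - 1) ^ 2 / (2 * e) := by
      rw [← sq_abs (g z)]
      field_simp
      ring
    linarith [show 0 ≤ (e * |g z| - 1) ^ 2 / (2 * e) by positivity]
  calc |∫ z in (0:ℝ)..x, g z| ≤ ∫ z in (0:ℝ)..x, |g z| :=
        intervalIntegral.abs_integral_le_integral_abs hx.1
    _ ≤ ∫ z in (0:ℝ)..x, (e / 2 * g z ^ 2 + 1 / (2 * e)) :=
        intervalIntegral.integral_mono_on hx.1 (hgx.abs.intervalIntegrable_of_Icc hx.1)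
          ((sq_integrable.const_mul _).add intervalIntegrable_const) fun z _ => young z
    _ = (e * (∫ z in (0:ℝ)..x, g z ^ 2) + x / e) / 2 := by
        rw [intervalIntegral.integral_add (sq_integrable.const_mul _) intervalIntegrable_const,
          intervalIntegral.integral_const_mul, intervalIntegral.integral_const, smul_eq_mul]
        field_simp
        ring
    _ ≤ (e * (∫ z in (0:ℝ)..L, g z ^ 2) + x / e) / 2 := by
        gcongr
        exact intervalIntegral.integral_mono_interval le_rfl hx.1 hx.2
          (.of_forall fun z => sq_nonneg (g z))
          ((hg.pow 2).intervalIntegrable_of_Icc (hx.1.trans hx.2))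

end Analysis

namespace IsSolOn

variable {p s₀ T N : ℝ} {φ s : ℝ → ℝ} {u : ℝ → ℝ → ℝ}

lemma integral_deriv_temp (H : IsSolOn p s₀ φ T s u) {t x : ℝ} (ht : t ∈ Ioc 0 T)
    (hx : x ∈ Icc 0 (s t)) : ∫ z in (0:ℝ)..x, deriv (u t) z = u t x - u t 0 :=
  intervalIntegral.integral_eq_sub_of_hasDerivAt_of_le hx.1
    ((H.continuousOn_temp (Ioc_subset_Icc_self ht)).mono (Icc_subset_Icc_right hx.2))
    (fun z hz => (H.ux_diff t ht z ⟨hz.1, hz.2.trans_le hx.2⟩).hasDerivAt)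
    (((H.continuousOn_deriv_temp ht).mono (Icc_subset_Icc_right hx.2)).intervalIntegrable_of_Icc
      hx.1)

lemma dirichlet_le_of_energy_le (H : IsSolOn p s₀ φ T s u) (hp : 1 ≤ p) {t : ℝ}
    (ht : t ∈ Icc 0 T) (hu : u t 0 ≤ N) (hE : 2 * energy p s u t ≤ N ^ (p + 1)) :
    ∫ z in (0:ℝ)..s t, deriv (u t) z ^ 2 ≤ 2 * N ^ (p + 1) := by
  have hu₀ := H.temp_zero_nonneg ht
  have power_le : u t 0 ^ (p + 1) ≤ N ^ (p + 1) := Real.rpow_le_rpow hu₀ hu (by linarith)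
  have potential_le : u t 0 ^ (p + 1) / (p + 1) ≤ u t 0 ^ (p + 1) / 2 := by
    gcongr
    linarith
  rw [energy] at hE
  linarith

lemma abs_temp_sub_temp_zero_le (H : IsSolOn p s₀ φ T s u) (hp : 1 ≤ p) (hN : 0 < N) {t x : ℝ}
    (ht : t ∈ Ioc 0 T) (hu : u t 0 ≤ N) (hE : 2 * energy p s u t ≤ N ^ (p + 1))
    (hx : x ∈ Icc 0 (s t)) (hxN : 64 * x ≤ N ^ (1 - p)) : |u t x - u t 0| ≤ 3 / 16 * N := by
  have hNp : 0 < N ^ p := by positivity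
  have oscillation := abs_integral_le_of_integral_sq (H.continuousOn_deriv_temp ht) hx
    (by positivity : 0 < 1 / (8 * N ^ p))
  have dirichlet_part : 1 / (8 * N ^ p) * (∫ z in (0:ℝ)..s t, deriv (u t) z ^ 2) ≤ N / 4 :=
    calc _ ≤ 1 / (8 * N ^ p) * (2 * N ^ (p + 1)) := by
          gcongr
          exact H.dirichlet_le_of_energy_le hp (Ioc_subset_Icc_self ht) hu hE
      _ = N / 4 := by
          rw [Real.rpow_add_one hN.ne']
          field_simp
          norm_num
  have length_part : x / (1 / (8 * N ^ p)) ≤ N / 8 := by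
    rw [Real.rpow_sub hN, Real.rpow_one, le_div_iff₀ hNp] at hxN
    rw [div_div_eq_mul_div, div_one]
    linarith
  rw [H.integral_deriv_temp ht hx] at oscillation
  linarith

lemma temp_rise_le (H : IsSolOn p s₀ φ T s u) (hp : 1 ≤ p) (hN : 0 < N) {t₁ t₂ x : ℝ}
    (h₁ : 0 < t₁) (h₁₂ : t₁ ≤ t₂) (h₂ : t₂ ≤ T) (hu₁ : u t₁ 0 = N / 4) (hu₂ : u t₂ 0 = N)
    (hE₁ : 2 * energy p s u t₁ ≤ N ^ (p + 1)) (hE₂ : 2 * energy p s u t₂ ≤ N ^ (p + 1))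
    (hx : x ∈ Icc 0 (s t₁)) (hxN : 64 * x ≤ N ^ (1 - p)) : 3 / 8 * N ≤ u t₂ x - u t₁ x := by
  have mem₁ : t₁ ∈ Ioc 0 T := ⟨h₁, h₁₂.trans h₂⟩
  have mem₂ : t₂ ∈ Ioc 0 T := ⟨h₁.trans_le h₁₂, h₂⟩
  have hx₂ : x ∈ Icc 0 (s t₂) := ⟨hx.1, hx.2.trans (H.monotoneOn_front
    (Ioc_subset_Icc_self mem₁) (Ioc_subset_Icc_self mem₂) h₁₂)⟩
  have osc₁ := abs_le.1 (H.abs_temp_sub_temp_zero_le hp hN mem₁ (by linarith) hE₁ hx hxN)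
  have osc₂ := abs_le.1 (H.abs_temp_sub_temp_zero_le hp hN mem₂ hu₂.le hE₂ hx₂ hxN)
  linarith [osc₁.2, osc₂.1]

lemma energy_le_of_temp_rise (H : IsSolOn p s₀ φ T s u) (hp : 1 ≤ p) {t₁ t₂ r δ lam : ℝ}
    (h₁ : 0 < t₁) (h₁₂ : t₁ ≤ t₂) (h₂ : t₂ < T) (hr : r ∈ Icc 0 (s t₁)) (hlam : 0 ≤ lam)
    (hδ : ∀ x ∈ Icc 0 r, δ ≤ u t₂ x - u t₁ x) :
    energy p s u t₂ ≤ energy p s u t₁ - 2 * (lam * δ * r) + (t₂ - t₁) * (lam ^ 2 * r) := by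
  have mem₁ : t₁ ∈ Icc 0 T := ⟨h₁.le, h₁₂.trans h₂.le⟩
  have mem₂ : t₂ ∈ Icc 0 T := ⟨h₁.le.trans h₁₂, h₂.le⟩
  have rise_cont : ContinuousOn (fun x => u t₂ x - u t₁ x) (Icc 0 r) :=
    ((H.continuousOn_temp mem₂).mono (Icc_subset_Icc_right
      (hr.2.trans (H.monotoneOn_front mem₁ mem₂ h₁₂)))).sub
        ((H.continuousOn_temp mem₁).mono (Icc_subset_Icc_right hr.2))
  have gain : δ * r ≤ ∫ x in (0:ℝ)..r, (u t₂ x - u t₁ x) := by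
    simpa [mul_comm] using intervalIntegral.integral_mono_on (μ := volume) hr.1
      intervalIntegrable_const (rise_cont.intervalIntegrable_of_Icc hr.1) hδ
  have key := H.energy_le_of_test_function hp h₁ h₁₂ h₂ hr (θ := fun _ => lam) continuous_const
  rw [intervalIntegral.integral_const_mul, intervalIntegral.integral_const, smul_eq_mul,
    sub_zero, mul_comm r] at key
  linarith [mul_le_mul_of_nonneg_left gain hlam]

-- The radius and the height of the test function are those of the boundary layer of a temperature
-- of size `N`: `r ~ N ^ (1 - p)` in space and `r ^ 2` in time.
lemma rpow_le_energy_sub_of_rise (H : IsSolOn p s₀ φ T s u) (hp : 1 ≤ p) (hN : 0 < N)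
    {t₁ t₂ : ℝ} (h₁ : 0 < t₁) (h₁₂ : t₁ ≤ t₂) (h₂ : t₂ < T) (hs : N ^ (1 - p) ≤ 64 * s₀)
    (hu₁ : u t₁ 0 = N / 4) (hu₂ : u t₂ 0 = N) (hE : 2 * energy p s u t₁ ≤ N ^ (p + 1)) :
    3 / 256 * N ^ (p + 1) ≤
      energy p s u t₁ - energy p s u t₂ + N ^ (3 * p - 1) * (t₂ - t₁) / 64 := by
  have hE₂ := (mul_le_mul_of_nonneg_left (H.energy_antitone hp h₁ h₁₂ h₂) zero_le_two).trans hE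
  have hr : N ^ (1 - p) / 64 ∈ Icc 0 (s t₁) :=
    ⟨by positivity, by linarith [H.initial_front_le ⟨h₁.le, h₁₂.trans h₂.le⟩]⟩
  have key := H.energy_le_of_temp_rise hp h₁ h₁₂ h₂ hr
    (by positivity : 0 ≤ N ^ (2 * p - 1)) (δ := 3 / 8 * N) fun x hx =>
      H.temp_rise_le hp hN h₁ h₁₂ h₂.le hu₁ hu₂ hE hE₂ ⟨hx.1, hx.2.trans hr.2⟩ (by linarith [hx.2])
  have gain_eq : N ^ (2 * p - 1) * N * N ^ (1 - p) = N ^ (p + 1) := by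
    rw [← Real.rpow_add_one hN.ne', ← Real.rpow_add hN]
    ring_nf
  have cost_eq : (N ^ (2 * p - 1)) ^ 2 * N ^ (1 - p) = N ^ (3 * p - 1) := by
    rw [← Real.rpow_mul_natCast hN.le, ← Real.rpow_add hN]
    push_cast
    ring_nf
  rw [← gain_eq, ← cost_eq]
  linarith

lemma rise_time_le (H : IsSolOn p s₀ φ T s u) (hp : 1 ≤ p) (hN : 0 < N) {t₁ t₂ : ℝ}
    (h₁ : 0 < t₁) (h₁₂ : t₁ ≤ t₂) (h₂ : t₂ < T) (hs : 2 * (N / 4) ^ (1 - p) ≤ s₀)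
    (hu : ∀ t ∈ Icc t₁ t₂, N / 4 ≤ u t 0) :
    N ^ (3 * p - 1) * (t₂ - t₁) ≤
      8 / 3 * 4 ^ (3 * p - 1) * (energy p s u t₁ - energy p s u t₂) := by
  have drop := H.energy_le_sub_of_le_temp_zero hp h₁ h₁₂ h₂ (by positivity) hs hu
  rw [Real.div_rpow hN.le zero_le_four] at drop
  calc N ^ (3 * p - 1) * (t₂ - t₁)
      = 8 / 3 * 4 ^ (3 * p - 1) *
          (3 / 8 * (N ^ (3 * p - 1) / 4 ^ (3 * p - 1)) * (t₂ - t₁)) := by field_simp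
    _ ≤ 8 / 3 * 4 ^ (3 * p - 1) * (energy p s u t₁ - energy p s u t₂) := by
        gcongr
        linarith

lemma rpow_le_mul_energy_sub_of_rise (H : IsSolOn p s₀ φ T s u) (hp : 1 ≤ p) (hN : 0 < N)
    {t₁ t₂ : ℝ} (h₁ : 0 < t₁) (h₁₂ : t₁ ≤ t₂) (h₂ : t₂ < T)
    (hs : 2 * (N / 4) ^ (1 - p) ≤ s₀) (hu₁ : u t₁ 0 = N / 4) (hu₂ : u t₂ 0 = N)
    (hu : ∀ t ∈ Icc t₁ t₂, N / 4 ≤ u t 0) (hE : 2 * energy p s u t₁ ≤ N ^ (p + 1)) :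
    N ^ (p + 1) ≤ 100 * (1 + 4 ^ (3 * p - 1)) * (energy p s u t₁ - energy p s u t₂) := by
  have power_le : N ^ (1 - p) ≤ (N / 4) ^ (1 - p) :=
    Real.rpow_le_rpow_of_nonpos (by positivity) (by linarith) (by linarith)
  have : 0 < (N / 4) ^ (1 - p) := by positivity
  have gap := H.rpow_le_energy_sub_of_rise hp hN h₁ h₁₂ h₂ (by linarith) hu₁ hu₂ hE
  have duration := H.rise_time_le hp hN h₁ h₁₂ h₂ hs hu
  have drop_nonneg : 0 ≤ energy p s u t₁ - energy p s u t₂ :=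
    sub_nonneg.2 (H.energy_antitone hp h₁ h₁₂ h₂)
  have : 0 ≤ 4 ^ (3 * p - 1) * (energy p s u t₁ - energy p s u t₂) := by positivity
  linarith

end IsSolOn

namespace IsGlobalSol

variable {p s₀ M : ℝ} {φ s : ℝ → ℝ} {u : ℝ → ℝ → ℝ}

lemma exists_rise (H : IsGlobalSol p s₀ φ s u) {τ t N : ℝ} (hτ : 0 ≤ τ) (hτt : τ ≤ t)
    (hN : 0 < N) (huτ : u τ 0 ≤ N / 4) (hut : N ≤ u t 0) :
    ∃ t₁ t₂, τ ≤ t₁ ∧ t₁ ≤ t₂ ∧ u t₁ 0 = N / 4 ∧ u t₂ 0 = N ∧ ∀ t ∈ Icc t₁ t₂, N / 4 ≤ u t 0 := by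
  obtain ⟨t₂, ht₂, hut₂⟩ := intermediate_value_Icc hτt (H.continuousOn_temp_zero hτ hτt)
    ⟨huτ.trans (by linarith), hut⟩
  obtain ⟨t₁, ht₁, hut₁, after⟩ := exists_eq_and_forall_Icc_right_ge ht₂.1
    (H.continuousOn_temp_zero hτ ht₂.1) huτ (by linarith)
  exact ⟨t₁, t₂, ht₁.1, ht₁.2, hut₁, hut₂, after⟩

lemma temp_zero_lt_of_energy_le (H : IsGlobalSol p s₀ φ s u) (hp : 1 < p) {N₀ E N τ t : ℝ}
    (hN₀ : 0 < N₀) (hs : 2 * N₀ ^ (1 - p) ≤ s₀) (hτ : 0 < τ) (hE : energy p s u τ ≤ E)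
    (hN : 1 ≤ N) (hN₀N : 4 * N₀ ≤ N) (hEN : 2 * E ≤ N)
    (hgap : 100 * (1 + 4 ^ (3 * p - 1)) * (E + N₀ ^ (p + 1)) < N) (huτ : u τ 0 ≤ N / 4)
    (hτt : τ ≤ t) : u t 0 < N := by
  by_contra! hut
  obtain ⟨t₁, t₂, hτ₁, h₁₂, hu₁, hu₂, hu⟩ := H.exists_rise hτ.le hτt (by linarith) huτ hut
  have h₁ : 0 < t₁ := hτ.trans_le hτ₁
  have h₂ : 0 < t₂ := h₁.trans_le h₁₂
  have energy₁ : energy p s u t₁ ≤ E := (H.energy_antitoneOn hp.le hτ h₁ hτ₁).trans hE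
  have energy₂ : -N₀ ^ (p + 1) < energy p s u t₂ := H.neg_rpow_lt_energy hp hN₀ hs h₂
  have N_le_rpow : N ≤ N ^ (p + 1) := Real.self_le_rpow_of_one_le hN (by linarith)
  have width : 2 * (N / 4) ^ (1 - p) ≤ s₀ := by
    have := Real.rpow_le_rpow_of_nonpos hN₀ (by linarith : N₀ ≤ N / 4) (by linarith : 1 - p ≤ 0)
    linarith
  have rise := (H.isSolOn_add_one h₂.le).rpow_le_mul_energy_sub_of_rise hp.le (by linarith) h₁ h₁₂
    (lt_add_one t₂) width hu₁ hu₂ hu (by linarith)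
  have : 100 * (1 + 4 ^ (3 * p - 1)) * (energy p s u t₁ - energy p s u t₂) ≤
      100 * (1 + 4 ^ (3 * p - 1)) * (E + N₀ ^ (p + 1)) := by
    gcongr
    linarith
  linarith

lemma exists_temp_zero_le (hp : 1 < p) (hM : 0 < M) :
    ∃ C > 0, ∀ (s₀ : ℝ) (φ s : ℝ → ℝ) (u : ℝ → ℝ → ℝ), IsGlobalSol p s₀ φ s u →
      M⁻¹ ≤ s₀ → s₀ ≤ M → (∀ x ∈ Icc 0 s₀, φ x ≤ M) → ∀ t, 0 ≤ t → u t 0 ≤ C := by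
  obtain ⟨τ, hτ, E, hE, early⟩ := exists_energy_le hp.le hM
  obtain ⟨N₀, hN₀, hN₀M⟩ : ∃ N₀ > 0, 2 * N₀ ^ (1 - p) = M⁻¹ := by
    refine ⟨(M⁻¹ / 2) ^ (1 - p)⁻¹, by positivity, ?_⟩
    rw [Real.rpow_inv_rpow (by positivity) (by linarith)]
    ring
  have hB : 0 < 100 * (1 + 4 ^ (3 * p - 1)) * (E + N₀ ^ (p + 1)) := by positivity
  set B := 100 * (1 + 4 ^ (3 * p - 1)) * (E + N₀ ^ (p + 1))
  refine ⟨1 + 8 * M + 4 * N₀ + 2 * E + B, by positivity, fun s₀ φ s u H hs hs' hφ t ht => ?_⟩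
  obtain ⟨early_le, energy_le⟩ := early s₀ φ s u H hs' hφ
  rcases le_total t τ with htτ | hτt
  · linarith [early_le t ⟨ht, htτ⟩]
  · exact (H.temp_zero_lt_of_energy_le hp hN₀ (hN₀M.trans_le hs) hτ energy_le (by linarith)
      (by linarith) (by linarith) (by linarith)
      (by linarith [early_le τ (right_mem_Icc.2 hτ.le)]) hτt).le

end IsGlobalSol

lemma sSup_abs_image_le_lipNorm (s₀ : ℝ) (φ : ℝ → ℝ) :
    sSup ((fun x => |φ x|) '' Icc 0 s₀) ≤ lipNorm s₀ φ :=
  le_add_of_nonneg_right (Real.sSup_nonneg (by rintro _ ⟨q, -, rfl⟩; positivity))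

lemma lipNorm_nonneg (s₀ : ℝ) (φ : ℝ → ℝ) : 0 ≤ lipNorm s₀ φ :=
  (Real.sSup_nonneg (by rintro _ ⟨x, -, rfl⟩; positivity)).trans (sSup_abs_image_le_lipNorm s₀ φ)

lemma le_lipNorm {s₀ x : ℝ} {φ : ℝ → ℝ} (hφ : ContinuousOn φ (Icc 0 s₀)) (hx : x ∈ Icc 0 s₀) :
    φ x ≤ lipNorm s₀ φ :=
  calc φ x ≤ |φ x| := le_abs_self _
    _ ≤ sSup ((fun x => |φ x|) '' Icc 0 s₀) :=
        le_csSup (isCompact_Icc.image_of_continuousOn hφ.abs).bddAbove (mem_image_of_mem _ hx)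
    _ ≤ lipNorm s₀ φ := sSup_abs_image_le_lipNorm s₀ φ

theorem stmt_16_general (p : ℝ) (hp : 1 < p) (M : ℝ) (hM : 0 < M) :
    ∃ C : ℝ, 0 < C ∧ ∀ (s₀ : ℝ) (φ : ℝ → ℝ) (s : ℝ → ℝ) (u : ℝ → ℝ → ℝ),
      IsGlobalSol p s₀ φ s u → M⁻¹ ≤ s₀ → s₀ ≤ M → (∀ x ∈ Icc 0 s₀, φ x ≤ M) →
      ∀ t : ℝ, 0 ≤ t → supNorm s u t ≤ C := by
  obtain ⟨C, hC, boundary_le⟩ := IsGlobalSol.exists_temp_zero_le hp hM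
  refine ⟨C + M, by positivity, fun s₀ φ s u H hs hs' hφ t ht => ?_⟩
  have HT := H.isSolOn_add_one ht
  have htT : t ∈ Icc 0 (t + 1) := ⟨ht, by linarith⟩
  have temp_le := HT.temp_le_of_temp_zero_le (A := C + M) (by positivity)
    (fun x hx => by linarith [hφ x hx])
    (fun τ hτ => by linarith [boundary_le s₀ φ s u H hs hs' hφ τ hτ.1.le]) t htT
  refine csSup_le ((nonempty_Ioo.2 (HT.s_pos t htT)).image _) ?_
  rintro _ ⟨x, hx, rfl⟩
  exact temp_le x (Ioo_subset_Icc_self hx)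

/-- Proposition 4.2: uniform `L^∞` bound for global-in-time solutions with
uniformly bounded initial data. -/
theorem stmt_16 (p : ℝ) (hp : 1 < p) (M : ℝ) (hM : 0 < M) :
    ∃ C : ℝ, 0 < C ∧ ∀ (s₀ : ℝ) (φ : ℝ → ℝ) (s : ℝ → ℝ) (u : ℝ → ℝ → ℝ),
      memW s₀ φ → IsGlobalSol p s₀ φ s u →
      s₀ + s₀⁻¹ + lipNorm s₀ φ ≤ M →
      ∀ t : ℝ, 0 ≤ t → supNorm s u t ≤ C := by
  obtain ⟨C, hC, bound⟩ := stmt_16_general p hp M hM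
  refine ⟨C, hC, fun s₀ φ s u ⟨hs₀, ⟨K, hφ⟩, _⟩ H hle => ?_⟩
  have inv_pos : 0 < s₀⁻¹ := inv_pos.2 hs₀
  have norm_nonneg := lipNorm_nonneg s₀ φ
  exact bound s₀ φ s u H (inv_le_of_inv_le₀ hs₀ (by linarith)) (by linarith)
    fun x hx => (le_lipNorm hφ.continuousOn hx).trans (by linarith)
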